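/- arXiv:0910.0433 — 2 statements merged into one kernel-verified Lean document; each statement's English description precedes it below -/
import Mathlib

section
/- There is a constant C such that for every h ∈ C^∞(ℝ⁴) and every R > 1, ‖h‖_{L^∞({x : R ≤ |x| ≤ 2R})} ≤ C R^{−3/2} Σ_{|μ|≤2, j≤1} ‖Ω^μ ∇_r^j h‖_{L²({x : R/2 ≤ |x| ≤ 4R})}. -/
/-!
Write `x = r₀ ω` with `‖ω‖ = 1`. The fundamental theorem of calculus along the ray through `ω`, with a
linear cutoff, bounds `|h x|` by the integral of `|h| + |∇_r h|` over `r ∈ [r₀, r₀ + 1]`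
(`radial_bound`); this segment stays in the annulus because `R > 1`.

At each radius `r` let `f` be `h` or `∇_r h`, and let `v` be a unit vector orthogonal to `ω`. Along the
great circle `s ↦ r (cos s ω + sin s v)` the derivative in `s` is a combination of the `Ω_{jk}` with
constant bounded coefficients (`hasDerivAt_geodesic`). Since `G s = (1 - s)² f` satisfies
`G 0 = ∫₀¹ s G'' ds`, it follows that `|f (rω)| ≤ 8 ∫₀¹ s ∑_{|μ| ≤ 2} |Ω^μ f| ds` (`angular_bound`).

Both bounds together, squared with Cauchy–Schwarz over a unit square in `(r, s)` and integrated over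
all `v ∈ S²`, give an integral of `s² F²` with `F = ∑ |Ω^μ ∇_r^j h|`. As `s ≤ 2 sin s` and `r ≥ R`, this is
at most `4 R⁻³` times an integral of `F²` against `r³ sin² s dr ds dv`, which is Lebesgue measure on `ℝ⁴`
(`lintegral_geodesic_polar_le`). The factor `R⁻³` becomes `R^{-3/2}` after taking the square root.
-/

open MeasureTheory Real Set
open scoped ENNReal FourierTransform

noncomputable section

/-- Euclidean space ℝⁿ. -/
abbrev Eu (n : ℕ) : Type := EuclideanSpace ℝ (Fin n)

/-- Spatial partial derivative ∂_i of a function on ℝⁿ. -/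
def sd {n : ℕ} (i : Fin n) (h : Eu n → ℝ) : Eu n → ℝ :=
  fun x => fderiv ℝ h x (EuclideanSpace.single i 1)

/-- Iterated spatial derivatives ∂_x^μ. -/
def sdIter {n : ℕ} : {m : ℕ} → (Fin m → Fin n) → (Eu n → ℝ) → Eu n → ℝ
  | 0, _, h => h
  | m + 1, μ, h => sd (μ 0) (sdIter (fun i : Fin m => μ i.succ) h)

/-- Time derivative ∂_t of u(t,x). -/
def td {n : ℕ} (u : ℝ → Eu n → ℝ) : ℝ → Eu n → ℝ :=
  fun t x => deriv (fun s => u s x) t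

/-- Space-time partial derivative ∂_α, with ∂₀ = ∂_t. -/
def pd {n : ℕ} (α : Fin (n + 1)) (u : ℝ → Eu n → ℝ) : ℝ → Eu n → ℝ :=
  if h : α = 0 then td u else fun t x => sd (α.pred h) (u t) x

/-- Iterated space-time derivatives ∂^μ. -/
def pdIter {n : ℕ} : {m : ℕ} → (Fin m → Fin (n + 1)) → (ℝ → Eu n → ℝ) → ℝ → Eu n → ℝ
  | 0, _, u => u
  | m + 1, μ, u => pd (μ 0) (pdIter (fun i : Fin m => μ i.succ) u)

/-- Iterated spatial derivatives of a space-time function. -/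
def sdIterT {n m : ℕ} (μ : Fin m → Fin n) (u : ℝ → Eu n → ℝ) : ℝ → Eu n → ℝ :=
  fun t x => sdIter μ (u t) x

/-- The d'Alembertian □ = ∂_t² − Δ. -/
def dAlembert {n : ℕ} (u : ℝ → Eu n → ℝ) : ℝ → Eu n → ℝ :=
  fun t x => td (td u) t x - ∑ i : Fin n, sd i (sd i (u t)) x

/-- |u'| : the magnitude of the space-time gradient (∂_t u, ∇_x u). -/
def gradMag {n : ℕ} (u : ℝ → Eu n → ℝ) : ℝ → Eu n → ℝ :=
  fun t x => Real.sqrt (∑ α : Fin (n + 1), pd α u t x ^ 2)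

/-- Smoothness of a space-time function. -/
def SmoothTX {n : ℕ} (u : ℝ → Eu n → ℝ) : Prop :=
  ContDiff ℝ (⊤ : ℕ∞) fun p : ℝ × Eu n => u p.1 p.2

/-- L² norm over a region S ⊆ ℝⁿ. -/
def L2x {n : ℕ} (S : Set (Eu n)) (f : Eu n → ℝ) : ℝ≥0∞ :=
  eLpNorm f 2 (volume.restrict S)

/-- Space-time L² norm over [0,T] × S. -/
def L2st {n : ℕ} (T : ℝ) (S : Set (Eu n)) (u : ℝ → Eu n → ℝ) : ℝ≥0∞ :=
  eLpNorm (fun p : ℝ × Eu n => u p.1 p.2) 2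
    ((volume.restrict (Icc 0 T)).prod (volume.restrict S))

/-- Japanese bracket ⟨x⟩ = (1+|x|²)^{1/2}. -/
def jap {n : ℕ} (x : Eu n) : ℝ := Real.sqrt (1 + ‖x‖ ^ 2)

/-- Homogeneous Sobolev norm ‖f‖_{Ḣ^s} = ‖ |ξ|^s 𝓕f(ξ) ‖_{L²}. -/
def sobolevHom {n : ℕ} (s : ℝ) (f : Eu n → ℝ) : ℝ≥0∞ :=
  eLpNorm (fun ξ : Eu n => ‖ξ‖ ^ s * ‖𝓕 (fun x : Eu n => (f x : ℂ)) ξ‖) 2 volume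

/-- A smooth compact obstacle K = {ρ ≤ 0} given by a smooth defining function. -/
structure SmoothObstacle (n : ℕ) where
  ρ : Eu n → ℝ
  smooth : ContDiff ℝ (⊤ : ℕ∞) ρ
  K : Set (Eu n)
  K_def : K = {x | ρ x ≤ 0}
  compact : IsCompact K
  grad_ne : ∀ x, ρ x = 0 → fderiv ℝ ρ x ≠ 0

/-- Ordered pairs (j,k), j < k, indexing the rotation fields Ω_{jk} on ℝ⁴. -/
abbrev OP : Type := {p : Fin 4 × Fin 4 // p.1 < p.2}

/-- Rotation vector field Ω_{jk} = x_j ∂_k − x_k ∂_j. -/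
def rot (j k : Fin 4) (h : Eu 4 → ℝ) : Eu 4 → ℝ :=
  fun x => x j * sd k h x - x k * sd j h x

/-- Products Ω^μ of rotation vector fields. -/
def rotIter : {m : ℕ} → (Fin m → OP) → (Eu 4 → ℝ) → Eu 4 → ℝ
  | 0, _, h => h
  | m + 1, μ, h => rot (μ 0).1.1 (μ 0).1.2 (rotIter (fun i : Fin m => μ i.succ) h)

/-- Radial derivative ∇_r = (x/|x|)·∇. -/
def radialD (h : Eu 4 → ℝ) : Eu 4 → ℝ :=
  fun x => fderiv ℝ h x (‖x‖⁻¹ • x)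

/-- Iterated radial derivatives ∇_r^j. -/
def radialIter : ℕ → (Eu 4 → ℝ) → Eu 4 → ℝ
  | 0, h => h
  | j + 1, h => radialD (radialIter j h)

/-- Magnitude of the spatial gradient ∇_x h. -/
def spGradMag (h : Eu 4 → ℝ) : Eu 4 → ℝ :=
  fun x => Real.sqrt (∑ i : Fin 4, sd i h x ^ 2)

/-- Index set for the fields Z = {∂_α, Ω_{jk}}. -/
abbrev ZIdx : Type := Fin 5 ⊕ OP

/-- Action of a single field Z. -/
def applyZ : ZIdx → (ℝ → Eu 4 → ℝ) → ℝ → Eu 4 → ℝ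
  | Sum.inl α, u => pd (n := 4) α u
  | Sum.inr p, u => fun t x => rot p.1.1 p.1.2 (u t) x

/-- Products Z^μ of the fields Z. -/
def ZIter : {m : ℕ} → (Fin m → ZIdx) → (ℝ → Eu 4 → ℝ) → ℝ → Eu 4 → ℝ
  | 0, _, u => u
  | m + 1, μ, u => applyZ (μ 0) (ZIter (fun i : Fin m => μ i.succ) u)

/-- The perturbed d'Alembertian □_h φ = □φ + h^{αβ} ∂_α ∂_β φ. -/
def boxH (h : Fin 5 → Fin 5 → ℝ → Eu 4 → ℝ) (φ : ℝ → Eu 4 → ℝ) : ℝ → Eu 4 → ℝ :=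
  fun t x => dAlembert φ t x
    + ∑ α : Fin 5, ∑ β : Fin 5, h α β t x * pd (n := 4) α (pd (n := 4) β φ) t x

/-- |h| = Σ_{α,β} |h^{αβ}|. -/
def habs (h : Fin 5 → Fin 5 → ℝ → Eu 4 → ℝ) : ℝ → Eu 4 → ℝ :=
  fun t x => ∑ α : Fin 5, ∑ β : Fin 5, |h α β t x|

/-- |∂h| = Σ_{α,β,γ} |∂_γ h^{αβ}|. -/
def dhabs (h : Fin 5 → Fin 5 → ℝ → Eu 4 → ℝ) : ℝ → Eu 4 → ℝ :=
  fun t x => ∑ γ : Fin 5, ∑ α : Fin 5, ∑ β : Fin 5, |pd (n := 4) γ (h α β) t x|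

/-- Mixed norm ‖G‖_{L¹_t L¹_r L²_ω(ℝ₊×ℝ⁴)}. -/
def mixedNorm (G : ℝ → Eu 4 → ℝ) : ℝ≥0∞ :=
  ∫⁻ t in Ioi (0 : ℝ), ∫⁻ r in Ioi (0 : ℝ),
    eLpNorm (fun ω : Metric.sphere (0 : Eu 4) 1 => G t (r • (ω : Eu 4))) 2
        (volume : Measure (Eu 4)).toSphere
      * ENNReal.ofReal (r ^ 3)

/-- The quantity M(T) (for `kmax = 50`) and A(T) (for `kmax = 49`) from the iteration. -/
def Mgen (kmax : ℕ) (Kc : Set (Eu 4)) (δ : ℝ) (u : ℝ → Eu 4 → ℝ) (T : ℝ) : ℝ≥0∞ :=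
  (∑ m ∈ Finset.range (kmax + 1), ∑ μ : Fin m → Fin 5,
      ((⨆ t ∈ Icc (0 : ℝ) T, L2x Kc fun x => gradMag (pdIter (n := 4) μ u) t x)
        + L2st T Kc fun t x => jap x ^ (-(1/2 : ℝ) - δ) * gradMag (pdIter (n := 4) μ u) t x))
  + (∑ m ∈ Finset.range kmax, ∑ μ : Fin m → ZIdx,
      ((L2st T Kc fun t x => jap x ^ (-(1/2 : ℝ) - δ) * gradMag (ZIter μ u) t x)
        + (L2st T (Kc ∩ {x : Eu 4 | 2 < ‖x‖}) fun t x =>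
            jap x ^ (-(1/2 : ℝ) - 2*δ) * ZIter μ u t x)
        + ⨆ t ∈ Icc (0 : ℝ) T, L2x Kc fun x => gradMag (ZIter μ u) t x))
  + L2st T (Kc ∩ {x : Eu 4 | ‖x‖ < 3}) u

/-- The data (f,g) satisfy the compatibility conditions to infinite order for the
Dirichlet problem □u = Q(u) on the exterior of {ρ ≤ 0}: there is a smooth function
attaining the data, vanishing on the boundary, and solving the equation
to infinite order at t = 0 (its Taylor coefficients at t = 0 are the formal ψ_k). -/
def CompatInfty {n : ℕ} (ρ : Eu n → ℝ) (f g : Eu n → ℝ)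
    (Q : (ℝ → Eu n → ℝ) → ℝ → Eu n → ℝ) : Prop :=
  ∃ U : ℝ → Eu n → ℝ, SmoothTX U ∧ (∀ x, U 0 x = f x) ∧ (∀ x, td U 0 x = g x) ∧
    (∀ t x, ρ x = 0 → U t x = 0) ∧
    ∀ k : ℕ, ∀ x, 0 ≤ ρ x → td^[k] (fun s y => dAlembert U s y - Q U s y) 0 x = 0

/-- The general quasilinear nonlinearity Q(u,u',u'') = A(u,u') + B^{αβ}(u,u') ∂_α∂_β u. -/
def Qnl {n : ℕ} (A : ℝ × (Fin (n + 1) → ℝ) → ℝ)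
    (B : Fin (n + 1) → Fin (n + 1) → ℝ × (Fin (n + 1) → ℝ) → ℝ)
    (u : ℝ → Eu n → ℝ) : ℝ → Eu n → ℝ :=
  fun t x => A (u t x, fun α => pd α u t x)
    + ∑ α, ∑ β, B α β (u t x, fun γ => pd γ u t x) * pd α (pd β u) t x

/-- The quadratically truncated nonlinearity, evaluated on the pair (v,w);
the iteration RHS is `iterRHS a b A B u_{l-1} u_l`. -/
def iterRHS (a : Fin 5 → ℝ) (b A : Fin 5 → Fin 5 → ℝ) (B : Fin 5 → Fin 5 → Fin 5 → ℝ)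
    (v w : ℝ → Eu 4 → ℝ) : ℝ → Eu 4 → ℝ :=
  fun t x => (∑ α : Fin 5, a α * v t x * pd (n := 4) α v t x)
    + (∑ α : Fin 5, ∑ β : Fin 5, b α β * pd (n := 4) α v t x * pd (n := 4) β v t x)
    + (∑ α : Fin 5, ∑ β : Fin 5, A α β * v t x * pd (n := 4) α (pd (n := 4) β w) t x)
    + (∑ α : Fin 5, ∑ β : Fin 5, ∑ γ : Fin 5,
        B α β γ * pd (n := 4) α v t x * pd (n := 4) β (pd (n := 4) γ w) t x)

/-! ### Polar coordinates around an axis of `ℝ⁴` -/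

/-- Integration in polar coordinates on `ℝ³`. -/
theorem lintegral_polar_three (f : Eu 3 → ℝ≥0∞) (hf : Measurable f) :
    ∫⁻ z, f z = ∫⁻ v : Metric.sphere (0 : Eu 3) 1, (∫⁻ ρ in Ioi (0 : ℝ),
      ENNReal.ofReal (ρ ^ 2) * f (ρ • (v : Eu 3))) ∂(volume : Measure (Eu 3)).toSphere := by
  have hmp := (volume : Measure (Eu 3)).measurePreserving_homeomorphUnitSphereProd
  have hd : Module.finrank ℝ (Eu 3) - 1 = 2 := by simp
  rw [hd] at hmp
  calc ∫⁻ z, f z = ∫⁻ z : ({0}ᶜ : Set (Eu 3)), f z ∂((volume : Measure (Eu 3)).comap (↑)) := by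
        rw [lintegral_subtype_comap (measurableSet_singleton _).compl, restrict_compl_singleton]
    _ = ∫⁻ q, f ((q.2 : ℝ) • (q.1 : Eu 3)) ∂(volume : Measure (Eu 3)).toSphere.prod
          (.volumeIoiPow 2) := by
        rw [← hmp.lintegral_comp_emb (Homeomorph.measurableEmbedding _)]
        refine lintegral_congr fun z => ?_
        have hz : ‖(z : Eu 3)‖ ≠ 0 := norm_ne_zero_iff.2 z.2
        simp [smul_smul, hz]
    _ = _ := by
        rw [lintegral_prod _ (by fun_prop)]
        refine lintegral_congr fun v => ?_
        rw [Measure.volumeIoiPow, lintegral_withDensity_eq_lintegral_mul _ (by fun_prop)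
          (by fun_prop)]
        exact lintegral_subtype_comap measurableSet_Ioi
          (fun ρ : ℝ => ENNReal.ofReal (ρ ^ 2) * f (ρ • (v : Eu 3)))

/-- The isometry `ℝ × ℝ³ → ℝ⁴`, `(t, z) ↦ t b₀ + z₀ b₁ + z₁ b₂ + z₂ b₃`, attached to an orthonormal
basis `b`. Its restriction to `{0} × S²` parametrizes the unit directions orthogonal to `b 0`. -/
def frameMap (b : OrthonormalBasis (Fin 4) ℝ (Eu 4)) (p : ℝ × Eu 3) : Eu 4 :=
  b.repr.symm (WithLp.toLp 2 (Fin.cons p.1 (fun i => p.2 i)))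

theorem frameMap_measurePreserving (b : OrthonormalBasis (Fin 4) ℝ (Eu 4)) :
    MeasurePreserving (frameMap b) := by
  have h1 := (volume_preserving_piFinSuccAbove (fun _ : Fin 4 => ℝ) 0).symm
  have h2 : MeasurePreserving (Prod.map (id : ℝ → ℝ) (WithLp.ofLp : Eu 3 → (Fin 3 → ℝ))) :=
    (MeasurePreserving.id _).prod (PiLp.volume_preserving_ofLp (Fin 3))
  have h3 := b.measurePreserving_repr_symm.comp
    ((PiLp.volume_preserving_toLp (Fin 4)).comp (h1.comp h2))
  have h4 : frameMap b = b.repr.symm ∘ WithLp.toLp 2 ∘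
      (MeasurableEquiv.piFinSuccAbove (fun _ : Fin 4 => ℝ) 0).symm ∘
      Prod.map (id : ℝ → ℝ) (WithLp.ofLp : Eu 3 → (Fin 3 → ℝ)) := by
    funext p
    simp [frameMap, MeasurableEquiv.piFinSuccAbove, Fin.insertNthEquiv, Function.comp_def]
  rw [h4]
  exact h3

theorem frameMap_polar (b : OrthonormalBasis (Fin 4) ℝ (Eu 4)) (t ρ : ℝ) (v : Eu 3) :
    frameMap b (t, ρ • v) = t • b 0 + ρ • frameMap b (0, v) := by
  simp [frameMap, Fin.sum_univ_succ, ← b.sum_repr_symm, smul_add, smul_smul]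

theorem norm_frameMap_zero (b : OrthonormalBasis (Fin 4) ℝ (Eu 4)) (v : Eu 3) :
    ‖frameMap b (0, v)‖ = ‖v‖ := by
  simp [frameMap, EuclideanSpace.norm_eq, Fin.sum_univ_succ]

theorem inner_frameMap_zero (b : OrthonormalBasis (Fin 4) ℝ (Eu 4)) (v : Eu 3) :
    inner ℝ (b 0) (frameMap b (0, v)) = 0 := by
  rw [← b.repr_apply_apply]
  simp [frameMap]

/-- In the coordinates `y = r (cos s b₀ + sin s v)`, with `v` in the unit sphere of `b₀ᗮ`, Lebesgue
measure on `ℝ⁴` is `r³ sin² s dr ds dv`: spherical coordinates on `b₀ᗮ ≃ ℝ³`, followed by plane polar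
coordinates in the pair `(⟨y, b₀⟩, radius in b₀ᗮ)`. Only the inequality obtained by keeping a part
`Q` of the `(r, s)` domain is stated. -/
theorem lintegral_geodesic_polar_le (b : OrthonormalBasis (Fin 4) ℝ (Eu 4))
    (Φ : Eu 4 → ℝ≥0∞) (hΦ : Measurable Φ) (Q : Set (ℝ × ℝ)) (hQ : MeasurableSet Q)
    (hQ' : Q ⊆ Ioi 0 ×ˢ Ioo 0 π) :
    ∫⁻ v : Metric.sphere (0 : Eu 3) 1, (∫⁻ p in Q, ENNReal.ofReal (p.1 ^ 3 * sin p.2 ^ 2) *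
        Φ (p.1 • (cos p.2 • b 0 + sin p.2 • frameMap b (0, (v : Eu 3)))))
        ∂(volume : Measure (Eu 3)).toSphere ≤ ∫⁻ y, Φ y := by
  have hb := frameMap_measurePreserving b
  have hbm : Measurable (frameMap b) := hb.measurable
  calc _ ≤ ∫⁻ v : Metric.sphere (0 : Eu 3) 1, (∫⁻ t : ℝ, ∫⁻ ρ in Ioi (0 : ℝ),
          ENNReal.ofReal (ρ ^ 2) * Φ (frameMap b (t, ρ • (v : Eu 3))))
          ∂(volume : Measure (Eu 3)).toSphere := ?_
    _ = ∫⁻ t : ℝ, ∫⁻ v : Metric.sphere (0 : Eu 3) 1, (∫⁻ ρ in Ioi (0 : ℝ),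
          ENNReal.ofReal (ρ ^ 2) * Φ (frameMap b (t, ρ • (v : Eu 3))))
          ∂(volume : Measure (Eu 3)).toSphere := by
        rw [lintegral_lintegral_swap]
        refine Measurable.aemeasurable ?_
        refine Measurable.lintegral_prod_right'
          (f := fun q : ((Metric.sphere (0 : Eu 3) 1) × ℝ) × ℝ =>
          ENNReal.ofReal (q.2 ^ 2) * Φ (frameMap b (q.1.2, q.2 • (q.1.1 : Eu 3)))) ?_
        fun_prop
    _ = ∫⁻ t : ℝ, ∫⁻ z : Eu 3, Φ (frameMap b (t, z)) := by
        refine lintegral_congr fun t => ?_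
        rw [lintegral_polar_three _ (by fun_prop)]
    _ = ∫⁻ y, Φ y := by
        rw [← hb.lintegral_comp hΦ, Measure.volume_eq_prod, lintegral_prod _ (by fun_prop)]
  refine lintegral_mono fun v => ?_
  have h1 : ∫⁻ t : ℝ, ∫⁻ ρ in Ioi (0 : ℝ),
      ENNReal.ofReal (ρ ^ 2) * Φ (frameMap b (t, ρ • (v : Eu 3)))
      = ∫⁻ q : ℝ × ℝ, (univ ×ˢ Ioi (0 : ℝ)).indicator (fun q =>
        ENNReal.ofReal (q.2 ^ 2) * Φ (frameMap b (q.1, q.2 • (v : Eu 3)))) q := by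
    rw [lintegral_indicator (MeasurableSet.univ.prod measurableSet_Ioi), Measure.volume_eq_prod,
      ← Measure.prod_restrict, lintegral_prod _ (by fun_prop), Measure.restrict_univ]
  have hQt : Q ⊆ polarCoord.target := fun p hp =>
    ⟨(hQ' hp).1, by linarith [(hQ' hp).2.1, pi_pos], (hQ' hp).2.2⟩
  rw [h1, ← lintegral_comp_polarCoord_symm]
  refine le_trans ?_ (lintegral_mono_set hQt)
  refine setLIntegral_mono' hQ fun p hp => ?_
  have hr : 0 < p.1 := (hQ' hp).1
  have hs : 0 < sin p.2 := sin_pos_of_mem_Ioo (hQ' hp).2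
  have hsymm : polarCoord.symm p = (p.1 * cos p.2, p.1 * sin p.2) := rfl
  rw [hsymm, indicator_of_mem (by simpa using mul_pos hr hs), frameMap_polar, smul_eq_mul,
    ← mul_assoc, ← ENNReal.ofReal_mul hr.le, smul_add, smul_smul, smul_smul]
  refine le_of_eq ?_
  congr 2
  ring

/-! ### Rotation fields along great circles -/

theorem sum_OP {M : Type*} [AddCommMonoid M] (g : Fin 4 → Fin 4 → M) :
    ∑ p : OP, g p.1.1 p.1.2 = g 0 1 + g 0 2 + g 0 3 + g 1 2 + g 1 3 + g 2 3 := by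
  have h := (Finset.sum_subtype (F := (inferInstance : Fintype OP)) (p := fun p : Fin 4 × Fin 4 => p.1 < p.2)
    (Finset.univ.filter fun p : Fin 4 × Fin 4 => p.1 < p.2) (by simp) (fun p => g p.1 p.2))
  rw [← h, Finset.sum_filter, Fintype.sum_prod_type]
  simp [Fin.sum_univ_four, ← add_assoc]

/-- The pointwise sum `∑_{|μ| ≤ 2} |Ω^μ f|`. -/
def angSum (f : Eu 4 → ℝ) (y : Eu 4) : ℝ :=
  ∑ m ∈ Finset.range 3, ∑ μ : Fin m → OP, |rotIter μ f y|

theorem angSum_eq (f : Eu 4 → ℝ) (y : Eu 4) :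
    angSum f y = |f y| + ∑ p : OP, |rot p.1.1 p.1.2 f y|
      + ∑ p : OP, ∑ q : OP, |rot p.1.1 p.1.2 (rot q.1.1 q.1.2 f) y| := by
  have h1 : ∑ μ : Fin 1 → OP, |rotIter μ f y| = ∑ p : OP, |rot p.1.1 p.1.2 f y| :=
    Fintype.sum_equiv (Equiv.funUnique (Fin 1) OP) _ _ fun μ => rfl
  have h2 : ∑ μ : Fin 2 → OP, |rotIter μ f y|
      = ∑ p : OP, ∑ q : OP, |rot p.1.1 p.1.2 (rot q.1.1 q.1.2 f) y| := by
    rw [← Fintype.sum_prod_type']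
    exact Fintype.sum_equiv (finTwoArrowEquiv OP) _ _ fun μ => rfl
  rw [angSum, Finset.sum_range_succ, Finset.sum_range_succ, Finset.sum_range_one, h1, h2]
  simp [rotIter]

theorem angSum_nonneg (f : Eu 4 → ℝ) (y : Eu 4) : 0 ≤ angSum f y := by
  unfold angSum; positivity

theorem rot_eq_fderiv (j k : Fin 4) (f : Eu 4 → ℝ) (y : Eu 4) :
    rot j k f y = fderiv ℝ f y
      (y j • EuclideanSpace.single k 1 - y k • EuclideanSpace.single j 1) := by
  simp [rot, sd]

/-- No regularity of `f` is needed: the (total) function `fderiv ℝ f` is always measurable. -/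
theorem measurable_rot (j k : Fin 4) (f : Eu 4 → ℝ) : Measurable (rot j k f) := by
  have h := fun i : Fin 4 =>
    measurable_fderiv_apply_const ℝ f (EuclideanSpace.single i (1 : ℝ))
  exact (by fun_prop : Measurable fun x : Eu 4 => x j).mul (h k) |>.sub
    ((by fun_prop : Measurable fun x : Eu 4 => x k).mul (h j))

theorem measurable_radialD (f : Eu 4 → ℝ) : Measurable (radialD f) := by
  have h : radialD f = fun x => ‖x‖⁻¹ * ∑ i : Fin 4, x i * sd i f x := by
    funext x
    have hx : x = ∑ i : Fin 4, x i • EuclideanSpace.single i (1 : ℝ) := by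
      ext k
      simp [Finset.sum_apply, Pi.single_apply]
    unfold radialD sd
    conv_lhs => rw [map_smul]
    conv_lhs => enter [2, 2]; rw [hx]
    simp [map_sum]
  rw [h]
  have h := fun i : Fin 4 =>
    measurable_fderiv_apply_const ℝ f (EuclideanSpace.single i (1 : ℝ))
  refine measurable_norm.inv.mul (Finset.measurable_sum _ fun i _ => ?_)
  exact (by fun_prop : Measurable fun x : Eu 4 => x i).mul (h i)

theorem measurable_rotIter {m : ℕ} (μ : Fin m → OP) {f : Eu 4 → ℝ} (hf : Measurable f) :
    Measurable (rotIter μ f) := by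
  cases m with
  | zero => exact hf
  | succ m => exact measurable_rot _ _ _

/-- Smoothness on `ℝ⁴ \ {0}`. Radial derivatives of smooth functions are in general singular at the
origin, so this is the class stable under both `rot` and `radialD`. -/
def SmoothOff (f : Eu 4 → ℝ) : Prop := ∀ y : Eu 4, y ≠ 0 → ContDiffAt ℝ (⊤ : ℕ∞) f y

theorem SmoothOff.rot {f : Eu 4 → ℝ} (hf : SmoothOff f) (j k : Fin 4) :
    SmoothOff (rot j k f) := by
  intro y hy
  have h := fun i : Fin 4 => ((hf y hy).fderiv_right (m := (⊤ : ℕ∞)) (by simp)).clm_apply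
    (contDiffAt_const (c := EuclideanSpace.single i (1 : ℝ)))
  have hc := fun i : Fin 4 => (by fun_prop : ContDiffAt ℝ (⊤ : ℕ∞) (fun x : Eu 4 => x i) y)
  exact ((hc j).mul (h k)).sub ((hc k).mul (h j))

theorem SmoothOff.radialD {f : Eu 4 → ℝ} (hf : SmoothOff f) : SmoothOff (radialD f) := by
  intro y hy
  exact ((hf y hy).fderiv_right (m := (⊤ : ℕ∞)) (by simp)).clm_apply
    (((contDiffAt_norm ℝ hy).inv (norm_ne_zero_iff.2 hy)).smul contDiffAt_id)

theorem SmoothOff.differentiableAt {f : Eu 4 → ℝ} (hf : SmoothOff f) {y : Eu 4} (hy : y ≠ 0) :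
    DifferentiableAt ℝ f y :=
  (hf y hy).differentiableAt (by simp)

theorem norm_geodesic {ω v : Eu 4} (hω : ‖ω‖ = 1) (hv : ‖v‖ = 1) (hωv : inner ℝ ω v = 0)
    {r : ℝ} (hr : 0 < r) (s : ℝ) : ‖r • (cos s • ω + sin s • v)‖ = r := by
  have h : ‖cos s • ω + sin s • v‖ ^ 2 = 1 := by
    rw [norm_add_sq_real, norm_smul, norm_smul, inner_smul_left, inner_smul_right, hω, hv, hωv]
    simp
  have h' : ‖cos s • ω + sin s • v‖ = 1 := by
    nlinarith [norm_nonneg (cos s • ω + sin s • v)]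
  rw [norm_smul, h', Real.norm_of_nonneg hr.le, mul_one]

/-- The great circle of radius `r` through `rω` in the direction `v` is an integral curve of the
rotation field of the plane spanned by `ω` and `v`, which is the constant-coefficient combination
`∑_{j<k} (ω_j v_k - v_j ω_k) Ω_{jk}`. -/
theorem hasDerivAt_geodesic {ω v : Eu 4} (hω : ‖ω‖ = 1) (hv : ‖v‖ = 1)
    (hωv : inner ℝ ω v = 0) (f : Eu 4 → ℝ) (r s : ℝ)
    (hf : DifferentiableAt ℝ f (r • (cos s • ω + sin s • v))) :
    HasDerivAt (fun s => f (r • (cos s • ω + sin s • v)))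
      (∑ p : OP, (ω p.1.1 * v p.1.2 - v p.1.1 * ω p.1.2) *
        rot p.1.1 p.1.2 f (r • (cos s • ω + sin s • v))) s := by
  have hpath : HasDerivAt (fun s : ℝ => r • (cos s • ω + sin s • v))
      (r • ((-sin s) • ω + cos s • v)) s :=
    (((hasDerivAt_cos s).smul_const ω).add ((hasDerivAt_sin s).smul_const v)).const_smul r
  have h := hf.hasFDerivAt.comp_hasDerivAt s hpath
  refine h.congr_deriv (Eq.symm ?_)
  simp only [rot_eq_fderiv, ← smul_eq_mul, ← map_smul, ← map_sum]
  congr 1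
  have e1 : ω 0 ^ 2 + ω 1 ^ 2 + ω 2 ^ 2 + ω 3 ^ 2 = 1 := by
    have := EuclideanSpace.real_norm_sq_eq ω
    rw [hω, Fin.sum_univ_four] at this; linarith
  have e2 : v 0 ^ 2 + v 1 ^ 2 + v 2 ^ 2 + v 3 ^ 2 = 1 := by
    have := EuclideanSpace.real_norm_sq_eq v
    rw [hv, Fin.sum_univ_four] at this; linarith
  have e3 : ω 0 * v 0 + ω 1 * v 1 + ω 2 * v 2 + ω 3 * v 3 = 0 := by
    rw [PiLp.inner_apply, Fin.sum_univ_four] at hωv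
    simp at hωv; linarith
  rw [sum_OP (fun j k => (ω j • v k - v j • ω k) •
    ((r • (cos s • ω + sin s • v)) j • EuclideanSpace.single k (1 : ℝ) -
      (r • (cos s • ω + sin s • v)) k • EuclideanSpace.single j (1 : ℝ)))]
  ext i
  fin_cases i <;> simp
  · linear_combination r * (cos s * v 0 * e1 - sin s * ω 0 * e2 + (sin s * v 0 - cos s * ω 0) * e3)
  · linear_combination r * (cos s * v 1 * e1 - sin s * ω 1 * e2 + (sin s * v 1 - cos s * ω 1) * e3)
  · linear_combination r * (cos s * v 2 * e1 - sin s * ω 2 * e2 + (sin s * v 2 - cos s * ω 2) * e3)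
  · linear_combination r * (cos s * v 3 * e1 - sin s * ω 3 * e2 + (sin s * v 3 - cos s * ω 3) * e3)

/-! ### One-dimensional estimates -/

theorem ofReal_abs_sub_le_lintegral {H φ : ℝ → ℝ} {a b : ℝ} (hab : a ≤ b)
    (hH : ∀ s ∈ Icc a b, HasDerivAt H (φ s) s) (hφ : ContinuousOn φ (Icc a b)) :
    ENNReal.ofReal |H b - H a| ≤ ∫⁻ s in Ioc a b, ENNReal.ofReal |φ s| := by
  have hi : IntervalIntegrable φ volume a b :=
    ContinuousOn.intervalIntegrable (by rwa [uIcc_of_le hab])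
  rw [← intervalIntegral.integral_eq_sub_of_hasDerivAt (by rwa [uIcc_of_le hab]) hi,
    intervalIntegral.integral_of_le hab, ← Real.enorm_eq_ofReal_abs]
  refine (enorm_integral_le_lintegral_enorm _).trans (le_of_eq ?_)
  simp only [Real.enorm_eq_ofReal_abs]

theorem abs_apply_le_one {ω : Eu 4} (hω : ‖ω‖ = 1) (i : Fin 4) : |ω i| ≤ 1 := by
  simpa [hω] using PiLp.norm_apply_le ω i

/-- Two rotational derivatives along one great circle control `f (rω)`, with the weight `s` that
makes the square of the integrand integrate against the area element `sin² s ds dv` of `S³`. -/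
theorem angular_bound {f : Eu 4 → ℝ} (hf : SmoothOff f) {ω v : Eu 4} (hω : ‖ω‖ = 1)
    (hv : ‖v‖ = 1) (hωv : inner ℝ ω v = 0) {r : ℝ} (hr : 0 < r) :
    ENNReal.ofReal |f (r • ω)| ≤ ∫⁻ s in Ioc (0 : ℝ) 1,
      ENNReal.ofReal (8 * s * angSum f (r • (cos s • ω + sin s • v))) := by
  set P : ℝ → Eu 4 := fun s => r • (cos s • ω + sin s • v) with hP
  have hP0 : ∀ s, P s ≠ 0 := fun s => by
    rw [← norm_ne_zero_iff, hP]
    simp only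
    rw [norm_geodesic hω hv hωv hr]; exact hr.ne'
  have hPc : Continuous P := by fun_prop
  set a : OP → ℝ := fun p => ω p.1.1 * v p.1.2 - v p.1.1 * ω p.1.2 with ha
  have ha2 : ∀ p, |a p| ≤ 2 := fun p => by
    have h1 := abs_apply_le_one hω p.1.1
    have h2 := abs_apply_le_one hω p.1.2
    have h3 := abs_apply_le_one hv p.1.1
    have h4 := abs_apply_le_one hv p.1.2
    refine (abs_sub _ _).trans ?_
    rw [abs_mul, abs_mul]
    nlinarith [abs_nonneg (ω p.1.1), abs_nonneg (ω p.1.2), abs_nonneg (v p.1.1),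
      abs_nonneg (v p.1.2)]
  set g : ℝ → ℝ := fun s => f (P s) with hg
  set g1 : ℝ → ℝ := fun s => ∑ p : OP, a p * rot p.1.1 p.1.2 f (P s) with hg1
  set g2 : ℝ → ℝ := fun s => ∑ q : OP, a q *
    ∑ p : OP, a p * rot p.1.1 p.1.2 (rot q.1.1 q.1.2 f) (P s) with hg2
  have hd : ∀ s, HasDerivAt g (g1 s) s := fun s =>
    hasDerivAt_geodesic hω hv hωv f r s (hf.differentiableAt (hP0 s))
  have hd1 : ∀ s, HasDerivAt g1 (g2 s) s := fun s =>
    HasDerivAt.fun_sum fun q _ => (hasDerivAt_geodesic hω hv hωv _ r s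
      ((hf.rot _ _).differentiableAt (hP0 s))).const_mul (a q)
  have hcomp : ∀ {u : Eu 4 → ℝ}, SmoothOff u → Continuous fun s => u (P s) := fun {u} hu =>
    continuous_iff_continuousAt.2 fun s =>
      (hu (P s) (hP0 s)).continuousAt.comp hPc.continuousAt
  have hgc : Continuous g := hcomp hf
  have hg1c : Continuous g1 := continuous_finsetSum _ fun p _ =>
    continuous_const.mul (hcomp (hf.rot _ _))
  have hg2c : Continuous g2 := continuous_finsetSum _ fun q _ =>
    continuous_const.mul (continuous_finsetSum _ fun p _ =>
      continuous_const.mul (hcomp ((hf.rot _ _).rot _ _)))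
  -- With `G s = (1 - s)² g s`, the function `s G' - G` is a primitive of `s G''`, and it vanishes
  -- at `s = 1`, where `G` has a double zero.
  have hH : ∀ s, HasDerivAt
      (fun s => s * ((1 - s) ^ 2 * g1 s - 2 * (1 - s) * g s) - (1 - s) ^ 2 * g s)
      (s * ((1 - s) ^ 2 * g2 s - 4 * (1 - s) * g1 s + 2 * g s)) s := fun s => by
    have h1 : HasDerivAt (fun s : ℝ => 1 - s) (-1) s := by
      simpa using (hasDerivAt_id s).const_sub 1
    have h := ((hasDerivAt_id' s).mul
      (((h1.pow 2).mul (hd1 s)).sub ((h1.const_mul 2).mul (hd s)))).sub ((h1.pow 2).mul (hd s))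
    refine h.congr_deriv ?_
    simp
    ring
  have key := ofReal_abs_sub_le_lintegral (zero_le_one' ℝ) (fun s _ => hH s)
    (Continuous.continuousOn (by fun_prop))
  have hval : |f (r • ω)| = |1 * ((1 - 1) ^ 2 * g1 1 - 2 * (1 - 1) * g 1) - (1 - 1) ^ 2 * g 1 -
      (0 * ((1 - 0) ^ 2 * g1 0 - 2 * (1 - 0) * g 0) - (1 - 0) ^ 2 * g 0)| := by
    simp [hg, hP]
  rw [hval]
  refine key.trans (setLIntegral_mono' measurableSet_Ioc fun s hs => ENNReal.ofReal_le_ofReal ?_)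
  have hb1 : |g1 s| ≤ 2 * ∑ p : OP, |rot p.1.1 p.1.2 f (P s)| := by
    rw [Finset.mul_sum]
    refine (Finset.abs_sum_le_sum_abs _ _).trans (Finset.sum_le_sum fun p _ => ?_)
    rw [abs_mul]
    exact mul_le_mul_of_nonneg_right (ha2 p) (abs_nonneg _)
  have hb2 : |g2 s| ≤ 4 * ∑ p : OP, ∑ q : OP, |rot p.1.1 p.1.2 (rot q.1.1 q.1.2 f) (P s)| := by
    rw [Finset.sum_comm, show (4 : ℝ) = 2 * 2 by norm_num, mul_assoc, Finset.mul_sum,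
      Finset.mul_sum]
    refine (Finset.abs_sum_le_sum_abs _ _).trans (Finset.sum_le_sum fun q _ => ?_)
    rw [abs_mul]
    refine mul_le_mul (ha2 q) ?_ (abs_nonneg _) zero_le_two
    rw [Finset.mul_sum]
    refine (Finset.abs_sum_le_sum_abs _ _).trans (Finset.sum_le_sum fun p _ => ?_)
    rw [abs_mul]
    exact mul_le_mul_of_nonneg_right (ha2 p) (abs_nonneg _)
  have hs0 : 0 ≤ 1 - s := by linarith [hs.2]
  have hs1 : 1 - s ≤ 1 := by linarith [hs.1]
  have h3 : |(1 - s) ^ 2 * g2 s - 4 * (1 - s) * g1 s + 2 * g s|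
      ≤ |g2 s| + 4 * |g1 s| + 2 * |g s| := by
    have t1 : |(1 - s) ^ 2 * g2 s| ≤ |g2 s| := by
      rw [abs_mul, abs_of_nonneg (sq_nonneg _)]
      exact mul_le_of_le_one_left (abs_nonneg _) (by nlinarith)
    have t2 : |4 * (1 - s) * g1 s| ≤ 4 * |g1 s| := by
      rw [abs_mul, abs_of_nonneg (by positivity)]
      nlinarith [abs_nonneg (g1 s)]
    have t3 : |2 * g s| = 2 * |g s| := by rw [abs_mul]; norm_num
    refine (abs_add_le _ _).trans ?_
    have := abs_sub ((1 - s) ^ 2 * g2 s) (4 * (1 - s) * g1 s)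
    linarith
  have h4 : |(1 - s) ^ 2 * g2 s - 4 * (1 - s) * g1 s + 2 * g s| ≤ 8 * angSum f (P s) := by
    rw [angSum_eq]
    have : 0 ≤ ∑ p : OP, ∑ q : OP, |rot p.1.1 p.1.2 (rot q.1.1 q.1.2 f) (P s)| := by positivity
    have : 0 ≤ |f (P s)| := abs_nonneg _
    have : |g s| = |f (P s)| := rfl
    linarith
  rw [abs_mul, abs_of_pos hs.1]
  calc s * _ ≤ s * (8 * angSum f (P s)) := mul_le_mul_of_nonneg_left h4 hs.1.le
    _ = 8 * s * angSum f (P s) := by ring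

theorem radial_bound {f : Eu 4 → ℝ} (hf : SmoothOff f) {ω : Eu 4} (hω : ‖ω‖ = 1) {r₀ : ℝ}
    (hr₀ : 0 < r₀) :
    ENNReal.ofReal |f (r₀ • ω)| ≤ ∫⁻ r in Ioc r₀ (r₀ + 1),
      (ENNReal.ofReal |f (r • ω)| + ENNReal.ofReal |radialD f (r • ω)|) := by
  have hω0 : ω ≠ 0 := by rw [← norm_ne_zero_iff, hω]; exact one_ne_zero
  have hne : ∀ r ∈ Icc r₀ (r₀ + 1), r • ω ≠ 0 := fun r hr =>
    smul_ne_zero (hr₀.trans_le hr.1).ne' hω0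
  have hd : ∀ r ∈ Icc r₀ (r₀ + 1),
      HasDerivAt (fun r : ℝ => f (r • ω)) (radialD f (r • ω)) r := fun r hr => by
    have hr' : 0 < r := hr₀.trans_le hr.1
    have h := (hf.differentiableAt (hne r hr)).hasFDerivAt.comp_hasDerivAt r
      ((hasDerivAt_id' r).smul_const ω)
    refine h.congr_deriv ?_
    rw [radialD, norm_smul, hω, Real.norm_of_nonneg hr'.le, smul_smul, mul_one,
      inv_mul_cancel₀ hr'.ne']
  have hcomp : ∀ {u : Eu 4 → ℝ}, SmoothOff u →
      ContinuousOn (fun r : ℝ => u (r • ω)) (Icc r₀ (r₀ + 1)) := fun {u} hu r hr =>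
    ((hu _ (hne r hr)).continuousAt.comp (f := fun r : ℝ => r • ω)
      (by fun_prop)).continuousWithinAt
  -- The weight `r₀ + 1 - r` equals `1` at `r₀` and vanishes at the other end of the interval.
  have hH : ∀ r ∈ Icc r₀ (r₀ + 1), HasDerivAt (fun r => (r₀ + 1 - r) * f (r • ω))
      ((r₀ + 1 - r) * radialD f (r • ω) - f (r • ω)) r := fun r hr => by
    have h1 : HasDerivAt (fun s : ℝ => r₀ + 1 - s) (-1) r := by
      simpa using (hasDerivAt_id r).const_sub (r₀ + 1)
    refine (h1.mul (hd r hr)).congr_deriv ?_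
    ring
  have hc1 := hcomp hf
  have hc2 := hcomp hf.radialD
  have key := ofReal_abs_sub_le_lintegral (by linarith) hH
    (((by fun_prop : Continuous fun r : ℝ => r₀ + 1 - r).continuousOn.mul hc2).sub hc1)
  have hval : |f (r₀ • ω)| = |(r₀ + 1 - (r₀ + 1)) * f ((r₀ + 1) • ω)
      - (r₀ + 1 - r₀) * f (r₀ • ω)| := by
    simp
  rw [hval]
  refine key.trans (setLIntegral_mono' measurableSet_Ioc fun r hr => ?_)
  rw [← ENNReal.ofReal_add (abs_nonneg _) (abs_nonneg _)]
  refine ENNReal.ofReal_le_ofReal ?_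
  have h0 : 0 ≤ r₀ + 1 - r := by linarith [hr.2]
  have h1 : r₀ + 1 - r ≤ 1 := by linarith [hr.1]
  refine (abs_sub _ _).trans ?_
  rw [abs_mul, abs_of_nonneg h0]
  nlinarith [abs_nonneg (radialD f (r • ω))]

/-! ### Assembling the estimate -/

theorem measurable_angSum {f : Eu 4 → ℝ} (hf : Measurable f) : Measurable (angSum f) :=
  Finset.measurable_sum _ fun _ _ => Finset.measurable_sum _ fun μ _ =>
    (measurable_rotIter μ hf).abs

theorem L2x_angSum_le (A : Set (Eu 4)) {f : Eu 4 → ℝ} (hf : Measurable f) :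
    L2x A (angSum f) ≤ ∑ m ∈ Finset.range 3, ∑ μ : Fin m → OP, L2x A (rotIter μ f) := by
  have h1 : angSum f = ∑ m ∈ Finset.range 3, ∑ μ : Fin m → OP, fun y => |rotIter μ f y| := by
    funext y
    simp [angSum, Finset.sum_apply]
  have hm : ∀ {m : ℕ} (μ : Fin m → OP),
      AEStronglyMeasurable (fun y => |rotIter μ f y|) (volume.restrict A) := fun μ =>
    (measurable_rotIter μ hf).abs.aestronglyMeasurable
  rw [L2x, h1]
  refine (eLpNorm_sum_le (fun m _ => Finset.aestronglyMeasurable_sum _ fun μ _ => hm μ)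
    one_le_two).trans (Finset.sum_le_sum fun m _ => ?_)
  refine (eLpNorm_sum_le (fun μ _ => hm μ) one_le_two).trans (Finset.sum_le_sum fun μ _ => ?_)
  exact le_of_eq (eLpNorm_norm (rotIter μ f))

/-- Cauchy–Schwarz against the constant `1` for a measure of total mass one. -/
theorem sq_lintegral_le {α : Type*} [MeasurableSpace α] {μ : Measure α} (hμ : μ univ = 1)
    {g : α → ℝ≥0∞} (hg : Measurable g) : (∫⁻ a, g a ∂μ) ^ 2 ≤ ∫⁻ a, g a ^ 2 ∂μ := by
  have h := ENNReal.lintegral_mul_le_Lp_mul_Lq μ (Real.HolderConjugate.two_two) hg.aemeasurable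
    (aemeasurable_const (b := (1 : ℝ≥0∞)))
  simp [hμ] at h
  calc _ ≤ ((∫⁻ a, g a ^ 2 ∂μ) ^ (2⁻¹ : ℝ)) ^ 2 := by gcongr
    _ = _ := by
      rw [← ENNReal.rpow_natCast, ← ENNReal.rpow_mul]; norm_num

theorem exists_frame {ω : Eu 4} (hω : ‖ω‖ = 1) :
    ∃ b : OrthonormalBasis (Fin 4) ℝ (Eu 4), b 0 = ω := by
  have h : Orthonormal ℝ (({0} : Set (Fin 4)).domRestrict (fun _ => ω)) :=
    ⟨fun _ => hω, fun i j hij => absurd (Subsingleton.elim i j) hij⟩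
  obtain ⟨b, hb⟩ := h.exists_orthonormalBasis_extension_of_card_eq (by simp)
  exact ⟨b, hb 0 rfl⟩

/-- The squared estimate before division by the area of `S²`: the one-dimensional bounds are
combined for each direction `v ∈ S²`, squared by Cauchy–Schwarz, and integrated over `v`. -/
theorem sphere_bound {h : Eu 4 → ℝ} (hh : ContDiff ℝ (⊤ : ℕ∞) h) {R : ℝ} (hR : 1 < R)
    {x : Eu 4} (hx : R ≤ ‖x‖) (hx' : ‖x‖ ≤ 2 * R) :
    (volume : Measure (Eu 3)).toSphere univ * ENNReal.ofReal |h x| ^ 2 ≤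
      ENNReal.ofReal (256 * (R ^ 3)⁻¹) * L2x {y : Eu 4 | R/2 ≤ ‖y‖ ∧ ‖y‖ ≤ 4 * R}
        (angSum h + angSum (radialD h)) ^ 2 := by
  set A : Set (Eu 4) := {y : Eu 4 | R/2 ≤ ‖y‖ ∧ ‖y‖ ≤ 4 * R} with hA
  set F : Eu 4 → ℝ := angSum h + angSum (radialD h) with hF
  have hAm : MeasurableSet A :=
    (measurableSet_le measurable_const measurable_norm).inter
      (measurableSet_le measurable_norm measurable_const)
  have hFm : Measurable F := (measurable_angSum hh.continuous.measurable).add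
    (measurable_angSum (measurable_radialD h))
  have hF0 : ∀ y, 0 ≤ F y := fun y => add_nonneg (angSum_nonneg _ _) (angSum_nonneg _ _)
  have hR0 : 0 < R := by linarith
  have hr₀ : 0 < ‖x‖ := by linarith
  have hs : SmoothOff h := fun y _ => hh.contDiffAt
  have hω : ‖‖x‖⁻¹ • x‖ = 1 := by
    rw [norm_smul, norm_inv, norm_norm, inv_mul_cancel₀ hr₀.ne']
  have hxω : ‖x‖ • (‖x‖⁻¹ • x) = x := by rw [smul_smul, mul_inv_cancel₀ hr₀.ne', one_smul]
  obtain ⟨b, hb⟩ := exists_frame hω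
  rw [← hb] at hω hxω
  set Q : Set (ℝ × ℝ) := Ioc ‖x‖ (‖x‖ + 1) ×ˢ Ioc (0 : ℝ) 1 with hQ
  have hQm : MeasurableSet Q := measurableSet_Ioc.prod measurableSet_Ioc
  have hQsub : Q ⊆ Ioi 0 ×ˢ Ioo 0 π := fun p hp =>
    ⟨hr₀.trans hp.1.1, hp.2.1, by linarith [hp.2.2, pi_gt_three]⟩
  have hQ1 : (volume.restrict Q) univ = 1 := by
    simp [hQ, Measure.volume_eq_prod, Measure.prod_prod]
  set Φ : Eu 4 → ℝ≥0∞ := A.indicator fun y => ENNReal.ofReal (F y ^ 2) with hΦ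
  have hΦm : Measurable Φ := Measurable.indicator (by fun_prop) hAm
  have hΦint : ∫⁻ y, Φ y = L2x A F ^ 2 := by
    rw [hΦ, lintegral_indicator hAm, L2x,
      eLpNorm_eq_lintegral_rpow_enorm_toReal (by norm_num) (by norm_num), ← ENNReal.rpow_natCast,
      ← ENNReal.rpow_mul]
    norm_num
    refine lintegral_congr fun y => ?_
    rw [Real.enorm_of_nonneg (hF0 y), ENNReal.ofReal_pow (hF0 y)]
  have hv : ∀ v : Metric.sphere (0 : Eu 3) 1, ENNReal.ofReal |h x| ^ 2 ≤
      ENNReal.ofReal (256 * (R ^ 3)⁻¹) * ∫⁻ p in Q, ENNReal.ofReal (p.1 ^ 3 * sin p.2 ^ 2) *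
        Φ (p.1 • (cos p.2 • b 0 + sin p.2 • frameMap b (0, (v : Eu 3)))) := fun v => by
    set w := frameMap b (0, (v : Eu 3)) with hw
    have hw1 : ‖w‖ = 1 := by rw [hw, norm_frameMap_zero]; simp
    have hbw : inner ℝ (b 0) w = 0 := inner_frameMap_zero b v
    have hstep : ENNReal.ofReal |h x| ≤
        ∫⁻ p in Q, ENNReal.ofReal (8 * p.2 * F (p.1 • (cos p.2 • b 0 + sin p.2 • w))) := by
      rw [hQ, Measure.volume_eq_prod, ← Measure.prod_restrict, lintegral_prod _ (by fun_prop)]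
      have hrad := radial_bound hs hω hr₀
      rw [hxω] at hrad
      refine hrad.trans (setLIntegral_mono' measurableSet_Ioc fun r hr => ?_)
      have hr' : 0 < r := hr₀.trans hr.1
      refine (add_le_add (angular_bound hs hω hw1 hbw hr')
        (angular_bound hs.radialD hω hw1 hbw hr')).trans ?_
      have hm1 := measurable_angSum hh.continuous.measurable
      rw [← lintegral_add_left (by fun_prop)]
      refine setLIntegral_mono' measurableSet_Ioc fun s hs' => ?_
      have hs0 : 0 ≤ 8 * s := by linarith [hs'.1]
      rw [← ENNReal.ofReal_add (mul_nonneg hs0 (angSum_nonneg _ _))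
        (mul_nonneg hs0 (angSum_nonneg _ _)), ← mul_add]
      rfl
    calc ENNReal.ofReal |h x| ^ 2 ≤ (∫⁻ p in Q,
          ENNReal.ofReal (8 * p.2 * F (p.1 • (cos p.2 • b 0 + sin p.2 • w)))) ^ 2 := by gcongr
      _ ≤ ∫⁻ p in Q,
          ENNReal.ofReal (8 * p.2 * F (p.1 • (cos p.2 • b 0 + sin p.2 • w))) ^ 2 :=
        sq_lintegral_le hQ1 (by fun_prop)
      _ ≤ ∫⁻ p in Q, ENNReal.ofReal (256 * (R ^ 3)⁻¹) *
          (ENNReal.ofReal (p.1 ^ 3 * sin p.2 ^ 2) *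
            Φ (p.1 • (cos p.2 • b 0 + sin p.2 • w))) := by
        refine setLIntegral_mono' hQm fun p hp => ?_
        have hp1 : 0 < p.1 := (hQsub hp).1
        have hp2 : 0 < p.2 := hp.2.1
        have hRp : R ≤ p.1 := hx.trans hp.1.1.le
        have hpA : p.1 • (cos p.2 • b 0 + sin p.2 • w) ∈ A := by
          rw [hA, mem_ofPred_eq, norm_geodesic hω hw1 hbw hp1]
          exact ⟨by linarith, by linarith [hp.1.2]⟩
        rw [hΦ, indicator_of_mem hpA]
        set y := p.1 • (cos p.2 • b 0 + sin p.2 • w)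
        have hsin : p.2 ≤ 2 * sin p.2 := by
          have h1 := mul_le_sin hp2.le (by linarith [hp.2.2, pi_gt_three])
          have h2 : (1 : ℝ) / 2 ≤ 2 / π := by
            rw [div_le_div_iff₀ two_pos pi_pos]; linarith [pi_lt_four]
          nlinarith
        have hRr : 1 ≤ (R ^ 3)⁻¹ * p.1 ^ 3 := by
          rw [← div_eq_inv_mul, one_le_div (by positivity)]
          gcongr
        rw [← ENNReal.ofReal_pow (mul_nonneg (by positivity) (hF0 y)),
          ← ENNReal.ofReal_mul (by positivity), ← ENNReal.ofReal_mul (by positivity)]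
        refine ENNReal.ofReal_le_ofReal ?_
        have h1 : p.2 ^ 2 ≤ 4 * sin p.2 ^ 2 := by nlinarith
        calc (8 * p.2 * F y) ^ 2 = 64 * (1 * p.2 ^ 2) * F y ^ 2 := by ring
          _ ≤ 64 * (((R ^ 3)⁻¹ * p.1 ^ 3) * (4 * sin p.2 ^ 2)) * F y ^ 2 := by gcongr
          _ = _ := by ring
      _ = _ := lintegral_const_mul _ (by fun_prop)
  calc (volume : Measure (Eu 3)).toSphere univ * ENNReal.ofReal |h x| ^ 2
      = ∫⁻ _v : Metric.sphere (0 : Eu 3) 1, ENNReal.ofReal |h x| ^ 2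
          ∂(volume : Measure (Eu 3)).toSphere := by rw [lintegral_const, mul_comm]
    _ ≤ _ := lintegral_mono hv
    _ = _ := lintegral_const_mul' _ _ ENNReal.ofReal_ne_top
    _ ≤ ENNReal.ofReal (256 * (R ^ 3)⁻¹) * ∫⁻ y, Φ y := by
        gcongr
        exact lintegral_geodesic_polar_le b Φ hΦm Q hQm hQsub
    _ = _ := by rw [hΦint]

/-- Weighted Sobolev estimate on dyadic annuli in ℝ⁴. -/
theorem weighted_sobolev_annulus :
    ∃ C : ℝ, 0 < C ∧ ∀ h : Eu 4 → ℝ, ContDiff ℝ (⊤ : ℕ∞) h → ∀ R : ℝ, 1 < R →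
      ∀ x : Eu 4, R ≤ ‖x‖ → ‖x‖ ≤ 2 * R →
        ENNReal.ofReal |h x|
          ≤ ENNReal.ofReal (C * R ^ (-(3 : ℝ)/2)) *
            ∑ m ∈ Finset.range 3, ∑ μ : Fin m → OP, ∑ j ∈ Finset.range 2,
              L2x {y : Eu 4 | R/2 ≤ ‖y‖ ∧ ‖y‖ ≤ 4 * R}
                (rotIter μ (radialIter j h)) := by
  set σ : ℝ≥0∞ := (volume : Measure (Eu 3)).toSphere univ with hσ
  have hσt : σ ≠ ∞ := measure_ne_top _ _
  have hσ0 : σ ≠ 0 := by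
    rw [hσ, Ne, Measure.measure_univ_eq_zero]
    exact Measure.toSphere_ne_zero _
  have hσr : 0 < σ.toReal := ENNReal.toReal_pos hσ0 hσt
  refine ⟨16 / √σ.toReal, by positivity, fun h hh R hR x hx hx' => ?_⟩
  have hR0 : 0 < R := by linarith
  set A : Set (Eu 4) := {y : Eu 4 | R/2 ≤ ‖y‖ ∧ ‖y‖ ≤ 4 * R} with hA
  set S : ℝ≥0∞ := ∑ m ∈ Finset.range 3, ∑ μ : Fin m → OP, ∑ j ∈ Finset.range 2,
    L2x A (rotIter μ (radialIter j h)) with hS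
  have hFS : L2x A (angSum h + angSum (radialD h)) ≤ S := by
    have hm := hh.continuous.measurable
    refine (eLpNorm_add_le (measurable_angSum hm).aestronglyMeasurable
      (measurable_angSum (measurable_radialD h)).aestronglyMeasurable one_le_two).trans ?_
    refine (add_le_add (L2x_angSum_le A hm) (L2x_angSum_le A (measurable_radialD h))).trans ?_
    rw [hS]
    simp only [Finset.sum_range_succ _ 1, Finset.sum_range_one, radialIter,
      Finset.sum_add_distrib]
    exact le_rfl
  have key : σ * ENNReal.ofReal |h x| ^ 2 ≤ ENNReal.ofReal (256 * (R ^ 3)⁻¹) * S ^ 2 :=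
    (sphere_bound hh hR hx hx').trans (by gcongr)
  have hC : σ * ENNReal.ofReal (16 / √σ.toReal * R ^ (-(3 : ℝ)/2)) ^ 2
      = ENNReal.ofReal (256 * (R ^ 3)⁻¹) := by
    have hpow : (R ^ (-(3 : ℝ)/2)) ^ 2 = (R ^ 3)⁻¹ := by
      rw [← Real.rpow_natCast, ← Real.rpow_mul hR0.le, ← Real.rpow_natCast, ← Real.rpow_neg hR0.le]
      norm_num
    rw [← ENNReal.ofReal_pow (by positivity)]
    conv_lhs => rw [← ENNReal.ofReal_toReal hσt]
    rw [← ENNReal.ofReal_mul hσr.le, ENNReal.toReal_ofReal hσr.le, mul_pow, hpow, div_pow,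
      Real.sq_sqrt hσr.le]
    congr 1
    field_simp
    norm_num
  rw [← (ENNReal.pow_right_strictMono two_ne_zero).le_iff_le, mul_pow,
    ← ENNReal.mul_le_mul_iff_right hσ0 hσt, ← mul_assoc, hC]
  exact key
end
end

section
/- There is a constant C such that for every h ∈ C₀^∞(ℝ⁴) and every R > 0, R ‖h‖_{L^∞({x : R/2 < |x| < R})} ≤ C Σ_{|μ|≤2} ‖∇_x Ω^μ h‖_{L²(ℝ⁴)}. -/
/-!
The estimate combines a one-dimensional radial bound with a Sobolev inequality on the sphere.

*Radial part.* For `F` smooth with compact support and `p ≠ 0`, integrating `∂_σ F(σp)` inwards from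
infinity and applying Cauchy–Schwarz with `∫_a^∞ σ⁻³ dσ = 1/(2a²)` gives
`a² |F(ap)|² ≤ ½ |p|² ∫₀^∞ σ³ |∇F(σp)|² dσ` (`radial_estimate`). The integral on the right is
`rayEnergy F p`.

*Angular part.* Let `x = r e` with `|e| = 1`. For `|w| < 1/2` let `γ_w(t)` be the projection of
`e + t w` to the sphere of radius `r` (`arc`). Its velocity is `|e + t w|⁻²` times the rotation
generator of the plane spanned by `e` and `w`, which is a constant coefficient combination of the
`Ω_{jk}` (`hasDerivAt_arc`, `fderiv_rotation`). Hence the first two derivatives of `h ∘ γ_w` are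
controlled by `Ω^μ h`, `|μ| ≤ 2`. The identity `g(0) = ∫₀¹ t ((1 - t)² g)'' dt` then yields
`|h(x)| ≤ C ∫₀¹ t Σ_μ |Ω^μ h(γ_w(t))| dt` for every `w` (`abs_le_lintegral_arc`).

*Averaging.* Cauchy–Schwarz in `t`, with `t = t^{-1/4} t^{5/4}`, and the radial bound at `γ_w(t)`
give `r² |h(x)|² ≤ C Σ_μ ∫₀¹ t^{5/2} rayEnergy(Ω^μ h)(e + t w) dt`
(`sq_le_lintegral_rayEnergy`). The average over the ball `|w| < 1/2` of `rayEnergy F (e + t w)` is at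
most `C t⁻³ ‖∇F‖₂²`: after substituting `y = σ(e + t w)`, each `y` is hit for `σ` in a window of
logarithmic length `O(t)`, while the Jacobian contributes `t⁻⁴` (`lintegral_rayEnergy_le`). The
remaining integral `∫₀¹ t^{-1/2} dt` converges; this is where two angular derivatives suffice in
the three angular dimensions.
-/

open MeasureTheory Real Set
open scoped ENNReal FourierTransform

noncomputable section

/-! ### One-dimensional and measure-theoretic tools -/

/-- Cauchy–Schwarz for lower integrals, in squared form. -/
lemma lintegral_mul_sq_le {α : Type*} [MeasurableSpace α] (μ : Measure α) {f g : α → ℝ≥0∞}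
    (hf : AEMeasurable f μ) (hg : AEMeasurable g μ) :
    (∫⁻ a, f a * g a ∂μ) ^ 2 ≤ (∫⁻ a, f a ^ 2 ∂μ) * ∫⁻ a, g a ^ 2 ∂μ := by
  have key := ENNReal.lintegral_mul_le_Lp_mul_Lq μ Real.HolderConjugate.two_two hf hg
  simp only [Pi.mul_apply, ENNReal.rpow_two] at key
  have half_sq : ∀ z : ℝ≥0∞, (z ^ (1 / 2 : ℝ)) ^ 2 = z := fun z => by
    rw [← ENNReal.rpow_two, ← ENNReal.rpow_mul]; norm_num
  calc (∫⁻ a, f a * g a ∂μ) ^ 2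
      ≤ ((∫⁻ a, f a ^ 2 ∂μ) ^ (1 / 2 : ℝ) * (∫⁻ a, g a ^ 2 ∂μ) ^ (1 / 2 : ℝ)) ^ 2 := by
        gcongr
    _ = _ := by rw [mul_pow, half_sq, half_sq]

/-- A one-dimensional representation of `g 0` by second derivatives with a weight vanishing at
`0`: since `χ(t) = (1 - t)²` satisfies `χ(0) = 1`, `χ(1) = χ'(1) = 0`, integration by parts gives
`g 0 = ∫₀¹ t (χ g)'' dt`. -/
lemma abs_zero_le_lintegral_second {g g' g'' : ℝ → ℝ} (hg : ∀ t ∈ Icc (0 : ℝ) 1, HasDerivAt g (g' t) t)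
    (hg' : ∀ t ∈ Icc (0 : ℝ) 1, HasDerivAt g' (g'' t) t) (hc : ContinuousOn g'' (Icc 0 1)) {S : ℝ → ℝ}
    (hS : ∀ t ∈ Ioc (0 : ℝ) 1, 2 * |g t| + 4 * |g' t| + |g'' t| ≤ S t) :
    ENNReal.ofReal |g 0| ≤ ∫⁻ t in Ioc (0 : ℝ) 1, ENNReal.ofReal (t * S t) := by
  set u : ℝ → ℝ := fun t =>
    t * (-2 * (1 - t) * g t + (1 - t) ^ 2 * g' t) - (1 - t) ^ 2 * g t with hu
  set u' : ℝ → ℝ := fun t =>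
    t * (2 * g t - 4 * (1 - t) * g' t + (1 - t) ^ 2 * g'' t) with hu'
  have hgc : ContinuousOn g (Icc 0 1) := fun t ht => (hg t ht).continuousAt.continuousWithinAt
  have hg'c : ContinuousOn g' (Icc 0 1) := fun t ht =>
    (hg' t ht).continuousAt.continuousWithinAt
  have hd : ∀ t ∈ Icc (0 : ℝ) 1, HasDerivAt u (u' t) t := by
    intro t ht
    have h1 : HasDerivAt (fun s : ℝ => 1 - s) (-1) t := by
      simpa using (hasDerivAt_id t).const_sub 1
    have h2 := ((hasDerivAt_id t).mul (((h1.const_mul (-2)).mul (hg t ht)).add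
      ((h1.pow 2).mul (hg' t ht)))).sub ((h1.pow 2).mul (hg t ht))
    refine h2.congr_deriv ?_
    simp only [Pi.add_apply, Pi.mul_apply, Pi.pow_apply, id, hu', Nat.cast_ofNat]
    ring
  have hu'c : ContinuousOn u' (Icc 0 1) := by fun_prop
  have hI := intervalIntegral.integral_eq_sub_of_hasDerivAt (a := 0) (b := 1)
    (fun t ht => hd t (by rwa [uIcc_of_le zero_le_one] at ht))
    (hu'c.intervalIntegrable_of_Icc zero_le_one)
  have h0 : ∫ t in (0 : ℝ)..1, u' t = g 0 := by rw [hI]; simp [hu]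
  rw [← h0, intervalIntegral.integral_of_le zero_le_one, ← Real.norm_eq_abs, ofReal_norm]
  refine (enorm_integral_le_lintegral_enorm _).trans ?_
  refine setLIntegral_mono' measurableSet_Ioc fun t ht => ?_
  rw [← ofReal_norm]
  refine ENNReal.ofReal_le_ofReal ?_
  rw [Real.norm_eq_abs, hu', abs_mul, abs_of_pos ht.1]
  have ht0 := ht.1
  have ht1 := ht.2
  refine mul_le_mul_of_nonneg_left (le_trans ?_ (hS t ht)) ht.1.le
  have e1 : |4 * (1 - t) * g' t| ≤ 4 * |g' t| := by
    rw [abs_mul, abs_of_nonneg (by linarith : (0:ℝ) ≤ 4 * (1 - t))]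
    nlinarith [abs_nonneg (g' t)]
  have e2 : |(1 - t) ^ 2 * g'' t| ≤ |g'' t| := by
    rw [abs_mul, abs_of_nonneg (by positivity)]
    have : (1 - t) ^ 2 ≤ 1 := by nlinarith
    nlinarith [abs_nonneg (g'' t)]
  have e3 : |2 * g t| = 2 * |g t| := by rw [abs_mul, abs_two]
  calc _ ≤ |2 * g t| + |4 * (1 - t) * g' t| + |(1 - t) ^ 2 * g'' t| := by
        refine (abs_add_le _ _).trans ?_
        gcongr
        exact abs_sub _ _
    _ ≤ _ := by linarith

/-- The affine change of variables `y = a + b • w` on `ℝ⁴`. -/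
lemma lintegral_affine (a : Eu 4) {b : ℝ} (hb : 0 < b) {F : Eu 4 → ℝ≥0∞} (hF : Measurable F) :
    ∫⁻ w, F (a + b • w) = ENNReal.ofReal (b ^ 4)⁻¹ * ∫⁻ y, F y := by
  have h1 : ∫⁻ w, F (a + b • w) = ∫⁻ z, F (a + z) ∂(Measure.map (b • ·) (volume : Measure (Eu 4))) := by
    rw [lintegral_map (by fun_prop) (by fun_prop)]
  rw [h1, Measure.map_addHaar_smul _ hb.ne', lintegral_smul_measure, lintegral_add_left_eq_self]
  rw [abs_of_pos (by positivity)]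
  simp

/-! ### Rotation fields -/

lemma sum_OP_s8 (f : OP → ℝ) : ∑ p, f p =
    f ⟨(0, 1), by decide⟩ + f ⟨(0, 2), by decide⟩ + f ⟨(0, 3), by decide⟩ +
    f ⟨(1, 2), by decide⟩ + f ⟨(1, 3), by decide⟩ + f ⟨(2, 3), by decide⟩ := by
  have : (Finset.univ : Finset OP) = {⟨(0, 1), by decide⟩, ⟨(0, 2), by decide⟩,
      ⟨(0, 3), by decide⟩, ⟨(1, 2), by decide⟩, ⟨(1, 3), by decide⟩, ⟨(2, 3), by decide⟩} := by
    decide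
  rw [this]
  simp [Finset.sum_insert, add_assoc]

lemma fderiv_eq_sum_sd (F : Eu 4 → ℝ) (y v : Eu 4) : fderiv ℝ F y v = ∑ i, v i * sd i F y := by
  conv_lhs => rw [← (EuclideanSpace.basisFun (Fin 4) ℝ).sum_repr v]
  simp [sd]

lemma abs_fderiv_le (F : Eu 4 → ℝ) (y v : Eu 4) : |fderiv ℝ F y v| ≤ ‖v‖ * spGradMag F y := by
  rw [fderiv_eq_sum_sd, EuclideanSpace.norm_eq, spGradMag, ← Real.sqrt_mul (by positivity)]
  refine Real.abs_le_sqrt ?_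
  simpa using Finset.sum_mul_sq_le_sq_mul_sq Finset.univ (fun i => v i) (fun i => sd i F y)

/-- The coefficients of the rotation generator of the plane spanned by `e` and `w` in terms
of the fields `Ω_{jk}`. -/
def rotCoef (e w : Eu 4) (p : OP) : ℝ := e p.1.1 * w p.1.2 - e p.1.2 * w p.1.1

/-- The rotation generator `y ↦ ⟨e, y⟩ w - ⟨w, y⟩ e`, as a first order differential operator, is
a constant coefficient combination of the fields `Ω_{jk}`. -/
lemma fderiv_rotation (F : Eu 4 → ℝ) (e w y : Eu 4) :
    fderiv ℝ F y (inner ℝ e y • w - inner ℝ w y • e) =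
      ∑ p : OP, rotCoef e w p * rot p.1.1 p.1.2 F y := by
  rw [fderiv_eq_sum_sd, sum_OP_s8]
  simp only [rotCoef, rot, PiLp.inner_apply, Fin.sum_univ_four, PiLp.sub_apply, PiLp.smul_apply,
    smul_eq_mul, RCLike.inner_apply, conj_trivial]
  ring

lemma abs_rotCoef_le {e w : Eu 4} (he : ‖e‖ = 1) (hw : ‖w‖ < 1 / 2) (p : OP) :
    |rotCoef e w p| ≤ 1 := by
  have h1 : ∀ i, |e i| ≤ 1 := fun i => by
    simpa [he] using PiLp.norm_apply_le e i
  have h2 : ∀ i, |w i| ≤ 1 / 2 := fun i => by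
    simpa using (PiLp.norm_apply_le w i).trans hw.le
  have h3 : ∀ i j, |e i * w j| ≤ 1 / 2 := fun i j => by
    rw [abs_mul]
    nlinarith [h1 i, h2 j, abs_nonneg (e i), abs_nonneg (w j)]
  refine (abs_sub _ _).trans ?_
  linarith [h3 p.1.1 p.1.2, h3 p.1.2 p.1.1]

/-! ### Angular estimate along an arc -/

/-- The curve on the sphere of radius `r` traced by the central projection of the segment
`t ↦ e + t • w`. -/
def arc (r : ℝ) (e w : Eu 4) (t : ℝ) : Eu 4 := (r / ‖e + t • w‖) • (e + t • w)

lemma half_le_norm {e w : Eu 4} (he : ‖e‖ = 1) (hw : ‖w‖ < 1 / 2) {t : ℝ}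
    (ht : t ∈ Icc (0 : ℝ) 1) : 1 / 2 ≤ ‖e + t • w‖ := by
  have h1 : ‖t • w‖ ≤ 1 / 2 := by
    rw [norm_smul, Real.norm_eq_abs, abs_of_nonneg ht.1]
    nlinarith [norm_nonneg w, ht.1, ht.2]
  have h2 := norm_sub_norm_le e (-(t • w))
  rw [sub_neg_eq_add, norm_neg, he] at h2
  linarith

lemma norm_le_three_half {e w : Eu 4} (he : ‖e‖ = 1) (hw : ‖w‖ < 1 / 2) {t : ℝ}
    (ht : t ∈ Icc (0 : ℝ) 1) : ‖e + t • w‖ ≤ 3 / 2 := by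
  have h1 : ‖t • w‖ ≤ 1 / 2 := by
    rw [norm_smul, Real.norm_eq_abs, abs_of_nonneg ht.1]
    nlinarith [norm_nonneg w, ht.1, ht.2]
  have h2 := norm_add_le e (t • w)
  linarith

lemma hasDerivAt_segment (e w : Eu 4) (t : ℝ) : HasDerivAt (fun t : ℝ => e + t • w) w t := by
  simpa using ((hasDerivAt_id t).smul_const w).const_add e

/-- The arc moves along the rotation generator of the plane spanned by `e` and `w`, with scalar
speed `‖e + t • w‖⁻²`. -/
lemma hasDerivAt_arc (r : ℝ) (e w : Eu 4) {t : ℝ} (hp : e + t • w ≠ 0) :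
    HasDerivAt (arc r e w) ((‖e + t • w‖ ^ 2)⁻¹ •
      (inner ℝ e (arc r e w t) • w - inner ℝ w (arc r e w t) • e)) t := by
  have hs := hasDerivAt_segment e w t
  have hN : ‖e + t • w‖ ≠ 0 := norm_ne_zero_iff.2 hp
  have hn : HasDerivAt (fun t : ℝ => ‖e + t • w‖)
      (inner ℝ (e + t • w) w / ‖e + t • w‖) t := by
    have h1 := hs.norm_sq.sqrt (by positivity)
    simp only [Real.sqrt_sq (norm_nonneg _)] at h1
    refine h1.congr_deriv ?_
    field_simp
  have h2 := ((hasDerivAt_const t r).div hn hN).smul hs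
  have hfun : (((fun _ : ℝ => r) / fun t : ℝ => ‖e + t • w‖) • fun t : ℝ => e + t • w)
      = arc r e w := rfl
  rw [hfun] at h2
  refine h2.congr_deriv ?_
  have hsq : inner ℝ e (e + t • w) + t * inner ℝ w (e + t • w) = ‖e + t • w‖ ^ 2 := by
    rw [← real_inner_self_eq_norm_sq]
    conv_rhs => rw [inner_add_left, real_inner_smul_left]
  have hcomm : inner ℝ (e + t • w) w = inner ℝ w (e + t • w) := real_inner_comm _ _
  rw [hcomm]
  simp only [arc, Pi.div_apply, real_inner_smul_right]
  set N := ‖e + t • w‖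
  generalize inner ℝ e (e + t • w) = a at *
  generalize inner ℝ w (e + t • w) = b at *
  have ha : a = N ^ 2 - t * b := by linarith
  rw [ha]
  match_scalars <;> field_simp <;> ring

lemma hasDerivAt_comp_arc {F : Eu 4 → ℝ} (hF : Differentiable ℝ F) (r : ℝ) (e w : Eu 4) {t : ℝ}
    (hp : e + t • w ≠ 0) :
    HasDerivAt (fun t => F (arc r e w t)) ((‖e + t • w‖ ^ 2)⁻¹ *
      ∑ p : OP, rotCoef e w p * rot p.1.1 p.1.2 F (arc r e w t)) t := by
  have h := (hF (arc r e w t)).hasFDerivAt.comp_hasDerivAt t (hasDerivAt_arc r e w hp)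
  refine h.congr_deriv ?_
  rw [map_smul, fderiv_rotation, smul_eq_mul]

lemma contDiff_sd {F : Eu 4 → ℝ} (hF : ContDiff ℝ (⊤ : ℕ∞) F) (i : Fin 4) :
    ContDiff ℝ (⊤ : ℕ∞) (sd i F) := by
  unfold sd
  exact (hF.fderiv_right (m := (⊤ : ℕ∞)) (by simp)).clm_apply contDiff_const

lemma contDiff_rot {F : Eu 4 → ℝ} (hF : ContDiff ℝ (⊤ : ℕ∞) F) (j k : Fin 4) :
    ContDiff ℝ (⊤ : ℕ∞) (rot j k F) := by
  unfold rot
  have h1 := contDiff_sd hF j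
  have h2 := contDiff_sd hF k
  fun_prop

lemma hasCompactSupport_sd {F : Eu 4 → ℝ} (hF : HasCompactSupport F) (i : Fin 4) :
    HasCompactSupport (sd i F) :=
  hF.fderiv_apply ℝ _

lemma hasCompactSupport_rot {F : Eu 4 → ℝ} (hF : HasCompactSupport F) (j k : Fin 4) :
    HasCompactSupport (rot j k F) := by
  unfold rot
  exact ((hasCompactSupport_sd hF k).mul_left).sub ((hasCompactSupport_sd hF j).mul_left)

lemma contDiff_rotIter {h : Eu 4 → ℝ} (hh : ContDiff ℝ (⊤ : ℕ∞) h) {m : ℕ} (μ : Fin m → OP) :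
    ContDiff ℝ (⊤ : ℕ∞) (rotIter μ h) := by
  induction m with
  | zero => exact hh
  | succ m ih => exact contDiff_rot (ih _) _ _

lemma hasCompactSupport_rotIter {h : Eu 4 → ℝ} (hh : HasCompactSupport h) {m : ℕ}
    (μ : Fin m → OP) : HasCompactSupport (rotIter μ h) := by
  induction m with
  | zero => exact hh
  | succ m ih => exact hasCompactSupport_rot (ih _) _ _

/-- The pointwise sum of `|Ω^μ h|` over words of length at most two. -/
def rotSum (h : Eu 4 → ℝ) (y : Eu 4) : ℝ :=
  |h y| + ∑ p : OP, |rot p.1.1 p.1.2 h y| +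
    ∑ p : OP, ∑ q : OP, |rot q.1.1 q.1.2 (rot p.1.1 p.1.2 h) y|

/-- The angular estimate along a single arc. -/
lemma abs_le_lintegral_arc {h : Eu 4 → ℝ} (hh : ContDiff ℝ (⊤ : ℕ∞) h) (r : ℝ) {e w : Eu 4}
    (he : ‖e‖ = 1) (hw : ‖w‖ < 1 / 2) :
    ENNReal.ofReal |h (r • e)| ≤
      ∫⁻ t in Ioc (0 : ℝ) 1, ENNReal.ofReal (t * (40 * rotSum h (arc r e w t))) := by
  have hpos : ∀ t ∈ Icc (0 : ℝ) 1, e + t • w ≠ 0 := fun t ht h0 => by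
    have := half_le_norm he hw ht
    rw [h0, norm_zero] at this
    norm_num at this
  have harc : ContinuousOn (arc r e w) (Icc 0 1) := fun t ht =>
    (hasDerivAt_arc r e w (hpos t ht)).continuousAt.continuousWithinAt
  set c := rotCoef e w with hc
  set φ : ℝ → ℝ := fun t => (‖e + t • w‖ ^ 2)⁻¹ with hφ
  set φ' : ℝ → ℝ := fun t => -(2 * inner ℝ (e + t • w) w) / (‖e + t • w‖ ^ 2) ^ 2 with hφ'
  set γ := arc r e w with hγ
  have hdφ : ∀ t ∈ Icc (0 : ℝ) 1, HasDerivAt φ (φ' t) t := fun t ht => by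
    have h1 := (hasDerivAt_segment e w t).norm_sq.inv
      (pow_ne_zero 2 (norm_ne_zero_iff.2 (hpos t ht)))
    exact h1
  have hrot : ∀ p : OP, ContDiff ℝ (⊤ : ℕ∞) (rot p.1.1 p.1.2 h) := fun p => contDiff_rot hh _ _
  have hrot2 : ∀ p q : OP, ContDiff ℝ (⊤ : ℕ∞) (rot q.1.1 q.1.2 (rot p.1.1 p.1.2 h)) :=
    fun p q => contDiff_rot (hrot p) _ _
  set g' : ℝ → ℝ := fun t => φ t * ∑ p : OP, c p * rot p.1.1 p.1.2 h (γ t) with hg'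
  set g'' : ℝ → ℝ := fun t => φ' t * (∑ p : OP, c p * rot p.1.1 p.1.2 h (γ t)) +
    φ t * ∑ p : OP, c p * (φ t * ∑ q : OP, c q * rot q.1.1 q.1.2 (rot p.1.1 p.1.2 h) (γ t))
    with hg''
  have hφc : ContinuousOn φ (Icc 0 1) := fun t ht => (hdφ t ht).continuousAt.continuousWithinAt
  have hφ'c : ContinuousOn φ' (Icc 0 1) := by
    refine ContinuousOn.div (by fun_prop) (by fun_prop) fun t ht => ?_
    exact pow_ne_zero 2 (pow_ne_zero 2 (norm_ne_zero_iff.2 (hpos t ht)))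
  have h1 : ∀ t ∈ Icc (0 : ℝ) 1, HasDerivAt (fun t => h (γ t)) (g' t) t := fun t ht =>
    hasDerivAt_comp_arc (hh.differentiable (by simp)) r e w (hpos t ht)
  have h2 : ∀ t ∈ Icc (0 : ℝ) 1, HasDerivAt g' (g'' t) t := fun t ht => by
    refine (hdφ t ht).fun_mul (HasDerivAt.fun_sum fun p _ => ?_)
    exact (hasDerivAt_comp_arc ((hrot p).differentiable (by simp)) r e w (hpos t ht)).const_mul _
  have h3 : ContinuousOn g'' (Icc 0 1) := by
    refine (hφ'c.mul (continuousOn_finsetSum _ fun p _ => ?_)).add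
      (hφc.mul (continuousOn_finsetSum _ fun p _ => continuousOn_const.mul
        (hφc.mul (continuousOn_finsetSum _ fun q _ => ?_))))
    · exact continuousOn_const.mul ((hrot p).continuous.comp_continuousOn harc)
    · exact continuousOn_const.mul ((hrot2 p q).continuous.comp_continuousOn harc)
  have hc1 : ∀ p, |c p| ≤ 1 := abs_rotCoef_le he hw
  have hcs : ∀ f : OP → ℝ, |∑ p, c p * f p| ≤ ∑ p, |f p| := fun f => by
    refine (Finset.abs_sum_le_sum_abs _ _).trans (Finset.sum_le_sum fun p _ => ?_)
    rw [abs_mul]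
    nlinarith [hc1 p, abs_nonneg (f p)]
  have hγ0 : γ 0 = r • e := by simp [hγ, arc, he]
  have key := abs_zero_le_lintegral_second h1 h2 h3
    (S := fun t => 40 * rotSum h (γ t)) ?_
  · simpa [hγ0] using key
  intro t ht
  have ht' : t ∈ Icc (0 : ℝ) 1 := ⟨ht.1.le, ht.2⟩
  have hN := half_le_norm he hw ht'
  have hN2 := norm_le_three_half he hw ht'
  have hφ0 : 0 ≤ φ t := by simp only [hφ]; positivity
  have hφ4 : φ t ≤ 4 := by
    simp only [hφ]
    rw [inv_le_comm₀ (by positivity) (by norm_num)]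
    nlinarith
  have hφ'24 : |φ' t| ≤ 24 := by
    simp only [hφ']
    rw [abs_div, abs_neg, abs_mul, abs_two, abs_of_nonneg (by positivity : (0:ℝ) ≤ (‖e + t • w‖ ^ 2) ^ 2),
      div_le_iff₀ (by positivity)]
    have h5 := abs_real_inner_le_norm (e + t • w) w
    have h6 : ‖e + t • w‖ * ‖w‖ ≤ 3 / 4 := by nlinarith [norm_nonneg w]
    have h7 : (1 / 4 : ℝ) ≤ ‖e + t • w‖ ^ 2 := by nlinarith
    nlinarith
  set A := ∑ p : OP, |rot p.1.1 p.1.2 h (γ t)|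
  set B := ∑ p : OP, ∑ q : OP, |rot q.1.1 q.1.2 (rot p.1.1 p.1.2 h) (γ t)|
  have hA : 0 ≤ A := Finset.sum_nonneg fun _ _ => abs_nonneg _
  have hB : 0 ≤ B := Finset.sum_nonneg fun _ _ => Finset.sum_nonneg fun _ _ => abs_nonneg _
  have b1 : |g' t| ≤ 4 * A := by
    simp only [hg']
    rw [abs_mul, abs_of_nonneg hφ0]
    exact mul_le_mul hφ4 (hcs _) (abs_nonneg _) (by norm_num)
  have b2 : |g'' t| ≤ 24 * A + 4 * (4 * B) := by
    simp only [hg'']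
    refine (abs_add_le _ _).trans (add_le_add ?_ ?_)
    · rw [abs_mul]
      exact mul_le_mul hφ'24 (hcs _) (abs_nonneg _) (by norm_num)
    · rw [abs_mul, abs_of_nonneg hφ0]
      refine mul_le_mul hφ4 ((hcs _).trans ?_) (abs_nonneg _) (by norm_num)
      rw [Finset.mul_sum]
      refine Finset.sum_le_sum fun p _ => ?_
      rw [abs_mul, abs_of_nonneg hφ0]
      exact mul_le_mul hφ4 (hcs _) (abs_nonneg _) (by norm_num)
  have : rotSum h (γ t) = |h (γ t)| + A + B := rfl
  rw [this]
  linarith [abs_nonneg (h (γ t))]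

/-! ### Radial estimate -/

lemma continuous_spGradMag {F : Eu 4 → ℝ} (hF : ContDiff ℝ (⊤ : ℕ∞) F) :
    Continuous (spGradMag F) := by
  have := fun i => (contDiff_sd hF i).continuous
  unfold spGradMag
  fun_prop

/-- The weighted energy `∫₀^∞ σ³ |∇F(σp)|² dσ` along the ray through `p`. -/
def rayEnergy (F : Eu 4 → ℝ) (p : Eu 4) : ℝ≥0∞ :=
  ∫⁻ σ in Ioi (0 : ℝ), ENNReal.ofReal (σ ^ 3) * ENNReal.ofReal (spGradMag F (σ • p) ^ 2)

lemma lintegral_Ioi_inv_cube {a : ℝ} (ha : 0 < a) :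
    ∫⁻ s in Ioi a, ENNReal.ofReal (s ^ (-(3 / 2) : ℝ)) ^ 2 = ENNReal.ofReal (1 / (2 * a ^ 2)) := by
  have h1 : ∫⁻ s in Ioi a, ENNReal.ofReal (s ^ (-(3 / 2) : ℝ)) ^ 2
      = ∫⁻ s in Ioi a, ENNReal.ofReal (s ^ (-3 : ℝ)) := by
    refine setLIntegral_congr_fun measurableSet_Ioi fun s hs => ?_
    have hs0 : 0 < s := ha.trans hs
    rw [← ENNReal.ofReal_pow (by positivity), ← Real.rpow_natCast, ← Real.rpow_mul hs0.le]
    norm_num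
  rw [h1, ← ofReal_integral_eq_lintegral_ofReal
    (integrableOn_Ioi_rpow_of_lt (by norm_num) ha), integral_Ioi_rpow_of_lt (by norm_num) ha]
  · congr 1
    have : a ^ (-3 + 1 : ℝ) = (a ^ 2)⁻¹ := by
      rw [show (-3 + 1 : ℝ) = -2 by norm_num, Real.rpow_neg ha.le]
      norm_num
    rw [this]
    field_simp
    norm_num
  · refine (ae_restrict_iff' measurableSet_Ioi).2 (Filter.Eventually.of_forall fun s hs => ?_)
    exact Real.rpow_nonneg (ha.trans hs).le _

/-- The radial estimate: integrating `F` inwards from infinity along the ray through `p` and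
applying Cauchy–Schwarz against `σ⁻³`. -/
lemma radial_estimate {F : Eu 4 → ℝ} (hF : ContDiff ℝ (⊤ : ℕ∞) F) (hFc : HasCompactSupport F)
    {a : ℝ} (ha : 0 < a) {p : Eu 4} (hp : p ≠ 0) :
    ENNReal.ofReal (F (a • p) ^ 2) ≤
      ENNReal.ofReal (‖p‖ ^ 2 / (2 * a ^ 2)) * rayEnergy F p := by
  set f : ℝ → ℝ := fun s => F (s • (-p)) with hf
  have hfd : ∀ s, HasDerivAt f (fderiv ℝ F (s • (-p)) (-p)) s := fun s => by
    have h1 : HasDerivAt (fun s : ℝ => s • (-p)) (-p) s := by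
      simpa using (hasDerivAt_id s).smul_const (-p)
    exact (hF.differentiable (by simp) _).hasFDerivAt.comp_hasDerivAt s h1
  have hfs : ContDiff ℝ 1 f := (hF.of_le (by simp)).comp (contDiff_id.smul contDiff_const)
  have hfc : HasCompactSupport f :=
    hFc.comp_isClosedEmbedding (isClosedEmbedding_smul_left (neg_ne_zero.2 hp))
  have hcont := continuous_spGradMag hF
  have hnn : ∀ y, 0 ≤ spGradMag F y := fun y => Real.sqrt_nonneg _
  have h1 : ENNReal.ofReal |F (a • p)| ≤
      ∫⁻ s in Ioi a, ENNReal.ofReal (‖p‖ * spGradMag F (s • p)) := by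
    have h2 := HasCompactSupport.enorm_le_lintegral_Ici_deriv hfs hfc (-a)
    have h3 : f (-a) = F (a • p) := by simp [hf]
    rw [h3, ← ofReal_norm, Real.norm_eq_abs] at h2
    refine h2.trans ?_
    have h4 : ∫⁻ y in Iic (-a), ‖deriv f y‖ₑ = ∫⁻ y in Ici a, ‖deriv f (-y)‖ₑ := by
      have := (Measure.measurePreserving_neg (volume : Measure ℝ)).setLIntegral_comp_preimage
        (s := Iic (-a)) measurableSet_Iic (f := fun y => ‖deriv f y‖ₑ) (by
          have := (hfs.continuous_deriv le_rfl); fun_prop)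
      rw [← this]
      congr 2
      ext y; simp
    rw [h4, setLIntegral_congr Ioi_ae_eq_Ici.symm]
    refine lintegral_mono fun s => ?_
    rw [(hfd _).deriv, ← ofReal_norm]
    refine ENNReal.ofReal_le_ofReal ?_
    have := abs_fderiv_le F (s • p) (-p)
    simpa using this
  have h2 : ∫⁻ s in Ioi a, ENNReal.ofReal (‖p‖ * spGradMag F (s • p)) =
      ∫⁻ s in Ioi a, ENNReal.ofReal (s ^ (-(3 / 2) : ℝ)) *
        ENNReal.ofReal (s ^ (3 / 2 : ℝ) * (‖p‖ * spGradMag F (s • p))) := by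
    refine setLIntegral_congr_fun measurableSet_Ioi fun s hs => ?_
    have hs0 : 0 < s := ha.trans hs
    rw [← ENNReal.ofReal_mul (by positivity), ← mul_assoc, ← Real.rpow_add hs0]
    norm_num
  have hmeas : Measurable fun s : ℝ => spGradMag F (s • p) := by
    have : Continuous fun s : ℝ => spGradMag F (s • p) := by fun_prop
    exact this.measurable
  have h3 : ENNReal.ofReal (F (a • p) ^ 2) ≤ ENNReal.ofReal (1 / (2 * a ^ 2)) *
      ∫⁻ s in Ioi a, ENNReal.ofReal (s ^ (3 / 2 : ℝ) * (‖p‖ * spGradMag F (s • p))) ^ 2 := by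
    rw [← sq_abs, ENNReal.ofReal_pow (abs_nonneg _), ← lintegral_Ioi_inv_cube ha]
    refine le_trans ?_ (lintegral_mul_sq_le _ ?_ ?_)
    · rw [← h2]; gcongr
    · exact (by fun_prop : Measurable _).aemeasurable
    · exact (by fun_prop : Measurable _).aemeasurable
  refine h3.trans ?_
  have h4 : ∫⁻ s in Ioi a, ENNReal.ofReal (s ^ (3 / 2 : ℝ) * (‖p‖ * spGradMag F (s • p))) ^ 2
      ≤ ENNReal.ofReal (‖p‖ ^ 2) * rayEnergy F p := by
    rw [rayEnergy, ← lintegral_const_mul _ (by fun_prop)]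
    refine (setLIntegral_mono' measurableSet_Ioi fun s hs => ?_).trans
      (lintegral_mono_set (Ioi_subset_Ioi ha.le))
    have hs0 : 0 < s := ha.trans hs
    rw [← ENNReal.ofReal_pow (mul_nonneg (by positivity) (mul_nonneg (norm_nonneg _) (hnn _))),
      ← ENNReal.ofReal_mul (by positivity), ← ENNReal.ofReal_mul (by positivity)]
    refine ENNReal.ofReal_le_ofReal (le_of_eq ?_)
    have : (s ^ (3 / 2 : ℝ)) ^ 2 = s ^ 3 := by
      rw [← Real.rpow_natCast, ← Real.rpow_mul hs0.le, ← Real.rpow_natCast]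
      norm_num
    rw [mul_pow, mul_pow, this]
    ring
  calc _ ≤ ENNReal.ofReal (1 / (2 * a ^ 2)) * (ENNReal.ofReal (‖p‖ ^ 2) * rayEnergy F p) := by
        gcongr
    _ = _ := by
        rw [← mul_assoc, ← ENNReal.ofReal_mul (by positivity)]
        congr 2
        ring

lemma radial_arc {F : Eu 4 → ℝ} (hF : ContDiff ℝ (⊤ : ℕ∞) F) (hFc : HasCompactSupport F)
    {r : ℝ} (hr : 0 < r) {e w : Eu 4} (he : ‖e‖ = 1) (hw : ‖w‖ < 1 / 2) {t : ℝ}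
    (ht : t ∈ Icc (0 : ℝ) 1) :
    ENNReal.ofReal (r ^ 2 * F (arc r e w t) ^ 2) ≤ 3 * rayEnergy F (e + t • w) := by
  have hN := half_le_norm he hw ht
  have hN2 := norm_le_three_half he hw ht
  have hNpos : 0 < ‖e + t • w‖ := by linarith
  have h1 := radial_estimate hF hFc (a := r / ‖e + t • w‖) (by positivity) (norm_pos_iff.1 hNpos)
  rw [ENNReal.ofReal_mul (by positivity)]
  calc _ ≤ ENNReal.ofReal (r ^ 2) * (_ * rayEnergy F (e + t • w)) := by
        gcongr
        exact h1
    _ ≤ _ := by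
        rw [← mul_assoc, ← ENNReal.ofReal_mul (by positivity)]
        gcongr
        rw [← ENNReal.ofReal_ofNat 3]
        refine ENNReal.ofReal_le_ofReal ?_
        have : r ^ 2 * (‖e + t • w‖ ^ 2 / (2 * (r / ‖e + t • w‖) ^ 2)) = ‖e + t • w‖ ^ 4 / 2 := by
          field_simp
        rw [this]
        have : ‖e + t • w‖ ^ 4 ≤ (3 / 2) ^ 4 := by gcongr
        norm_num at this ⊢
        linarith

/-! ### Averaging over directions -/

/-- For fixed `y`, the parameters `σ` for which `y` lies in the ball of radius `σ t / 2` about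
`σ e` fill an interval of logarithmic length `O(t)`. -/
lemma lintegral_log_window {e : Eu 4} (he : ‖e‖ = 1) {t : ℝ} (ht : t ∈ Ioc (0 : ℝ) 1) (y : Eu 4) :
    ∫⁻ σ in Ioi (0 : ℝ), {σ : ℝ | ‖y - σ • e‖ < σ * t / 2}.indicator
      (fun σ => ENNReal.ofReal σ⁻¹) σ ≤ ENNReal.ofReal (2 * t) := by
  obtain ⟨ht0, ht1⟩ := ht
  set b := ‖y‖ / (1 + t / 2) with hb
  set d := ‖y‖ / (1 - t / 2) with hd
  have hsub : ∀ σ ∈ Ioi (0 : ℝ), ‖y - σ • e‖ < σ * t / 2 → σ ∈ Ioo b d := by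
    intro σ hσ h
    have hσ0 : 0 < σ := hσ
    have hn : ‖σ • e‖ = σ := by rw [norm_smul, he, Real.norm_eq_abs, abs_of_pos hσ0, mul_one]
    have h1 := norm_sub_norm_le y (σ • e)
    have h2 := norm_sub_norm_le (σ • e) y
    rw [norm_sub_rev] at h2
    rw [hn] at h1 h2
    constructor
    · rw [hb, div_lt_iff₀ (by linarith)]; linarith
    · rw [hd, lt_div_iff₀ (by linarith)]; linarith
  have h1 : ∫⁻ σ in Ioi (0 : ℝ), {σ : ℝ | ‖y - σ • e‖ < σ * t / 2}.indicator
      (fun σ => ENNReal.ofReal σ⁻¹) σ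
      ≤ ∫⁻ σ in Ioi (0 : ℝ), (Ioo b d).indicator (fun _ => ENNReal.ofReal b⁻¹) σ := by
    refine setLIntegral_mono' measurableSet_Ioi fun σ hσ => ?_
    by_cases h : ‖y - σ • e‖ < σ * t / 2
    · have hm := hsub σ hσ h
      have hb0 : 0 < b := by
        rcases (norm_nonneg y).eq_or_lt with h0 | h0
        · rw [hd, ← h0, zero_div] at hm
          exact absurd hm.2 (not_lt.2 (le_of_lt hσ))
        · rw [hb]; positivity
      rw [indicator_of_mem (by exact h), indicator_of_mem hm]
      refine ENNReal.ofReal_le_ofReal ?_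
      gcongr
      exact hm.1.le
    · rw [indicator_of_notMem (by exact h)]
      exact zero_le
  refine h1.trans ((lintegral_mono' Measure.restrict_le_self le_rfl).trans ?_)
  rw [lintegral_indicator measurableSet_Ioo, setLIntegral_const, Real.volume_Ioo,
    ← ENNReal.ofReal_mul (by positivity)]
  refine ENNReal.ofReal_le_ofReal ?_
  rcases (norm_nonneg y).eq_or_lt with h0 | h0
  · rw [hb, ← h0]; simp; linarith
  · have h2 : (1 - t / 2) ≠ 0 := by linarith
    have h3 : b⁻¹ * (d - b) = t / (1 - t / 2) := by
      rw [hb, hd]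
      have h4 : (1 + t / 2) ≠ 0 := by positivity
      have h5 : ‖y‖ ≠ 0 := h0.ne'
      generalize ‖y‖ = c at *
      have h6 : (2 - t) ≠ 0 := by linarith
      field_simp
      ring
    rw [h3, div_le_iff₀ (by linarith)]
    nlinarith

/-- Averaging the ray energy over the directions `e + t • w`, `‖w‖ < 1/2`, costs a factor `t⁻³`
(three transversal directions shrink by `t`; the fourth is absorbed by the radial integral). -/
lemma lintegral_rayEnergy_le {F : Eu 4 → ℝ} (hF : ContDiff ℝ (⊤ : ℕ∞) F) {e : Eu 4}
    (he : ‖e‖ = 1) {t : ℝ} (ht : t ∈ Ioc (0 : ℝ) 1) :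
    ∫⁻ w in Metric.ball (0 : Eu 4) (1 / 2), rayEnergy F (e + t • w) ≤
      ENNReal.ofReal (2 * (t ^ 3)⁻¹) * ∫⁻ y, ENNReal.ofReal (spGradMag F y ^ 2) := by
  have ht0 : 0 < t := ht.1
  set G : Eu 4 → ℝ≥0∞ := fun y => ENNReal.ofReal (spGradMag F y ^ 2) with hG
  have hGm : Measurable G := by
    have := (continuous_spGradMag hF).measurable
    fun_prop
  have hset : MeasurableSet {q : ℝ × Eu 4 | ‖q.2 - q.1 • e‖ < q.1 * t / 2} :=
    measurableSet_lt (by fun_prop) (by fun_prop)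
  have hset1 : ∀ σ : ℝ, MeasurableSet {y : Eu 4 | ‖y - σ • e‖ < σ * t / 2} := fun σ =>
    measurableSet_lt (by fun_prop) (by fun_prop)
  have hset2 : ∀ y : Eu 4, MeasurableSet {σ : ℝ | ‖y - σ • e‖ < σ * t / 2} := fun y =>
    measurableSet_lt (by fun_prop) (by fun_prop)
  have h1 : ∫⁻ w in Metric.ball (0 : Eu 4) (1 / 2), rayEnergy F (e + t • w) =
      ∫⁻ σ in Ioi (0 : ℝ), ∫⁻ w in Metric.ball (0 : Eu 4) (1 / 2),
        ENNReal.ofReal (σ ^ 3) * G (σ • (e + t • w)) := by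
    unfold rayEnergy
    rw [lintegral_lintegral_swap]
    refine Measurable.aemeasurable ?_
    change Measurable fun q : Eu 4 × ℝ => ENNReal.ofReal (q.2 ^ 3) * G (q.2 • (e + t • q.1))
    fun_prop
  have h2 : ∀ σ ∈ Ioi (0 : ℝ), ∫⁻ w in Metric.ball (0 : Eu 4) (1 / 2),
        ENNReal.ofReal (σ ^ 3) * G (σ • (e + t • w)) =
      ∫⁻ y, ENNReal.ofReal (t ^ 4)⁻¹ * ({q : ℝ × Eu 4 | ‖q.2 - q.1 • e‖ < q.1 * t / 2}.indicator
        (fun q => ENNReal.ofReal q.1⁻¹ * G q.2) (σ, y)) := by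
    intro σ hσ
    have hσ0 : 0 < σ := hσ
    set K : Eu 4 → ℝ≥0∞ := {y : Eu 4 | ‖y - σ • e‖ < σ * t / 2}.indicator G with hK
    have hKm : Measurable K := hGm.indicator (hset1 σ)
    have h3 : ∀ w, (Metric.ball (0 : Eu 4) (1 / 2)).indicator (fun w => G (σ • (e + t • w))) w =
        K (σ • e + (σ * t) • w) := by
      intro w
      have harg : σ • (e + t • w) = σ • e + (σ * t) • w := by rw [smul_add, smul_smul]
      have hiff : w ∈ Metric.ball (0 : Eu 4) (1 / 2) ↔
          σ • e + (σ * t) • w ∈ {y : Eu 4 | ‖y - σ • e‖ < σ * t / 2} := by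
        have hst : 0 < σ * t := by positivity
        rw [mem_ball_zero_iff, mem_ofPred_eq, add_sub_cancel_left, norm_smul, Real.norm_eq_abs,
          abs_of_pos hst]
        constructor <;> intro h
        · nlinarith
        · by_contra h'
          push Not at h'
          nlinarith
      by_cases hw : w ∈ Metric.ball (0 : Eu 4) (1 / 2)
      · rw [indicator_of_mem hw, hK, indicator_of_mem (hiff.1 hw), harg]
      · rw [indicator_of_notMem hw, hK, indicator_of_notMem (fun h => hw (hiff.2 h))]
    rw [lintegral_const_mul _ (by fun_prop), ← lintegral_indicator Metric.isOpen_ball.measurableSet,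
      lintegral_congr h3, lintegral_affine _ (by positivity) hKm, ← mul_assoc,
      ← ENNReal.ofReal_mul (by positivity), ← lintegral_const_mul _ hKm]
    refine lintegral_congr fun y => ?_
    by_cases hy : ‖y - σ • e‖ < σ * t / 2
    · rw [hK, indicator_of_mem (by exact hy), indicator_of_mem (by exact hy), ← mul_assoc]
      have hcoef : ENNReal.ofReal (σ ^ 3 * ((σ * t) ^ 4)⁻¹) =
          ENNReal.ofReal (t ^ 4)⁻¹ * ENNReal.ofReal σ⁻¹ := by
        rw [← ENNReal.ofReal_mul (by positivity)]
        congr 1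
        field_simp
      rw [hcoef]
    · rw [hK, indicator_of_notMem (by exact hy), indicator_of_notMem (by exact hy)]
      simp
  have hjoint : Measurable ({q : ℝ × Eu 4 | ‖q.2 - q.1 • e‖ < q.1 * t / 2}.indicator
      (fun q => ENNReal.ofReal q.1⁻¹ * G q.2)) := by
    refine Measurable.indicator ?_ hset
    fun_prop
  rw [h1, setLIntegral_congr_fun measurableSet_Ioi h2, lintegral_lintegral_swap]
  · rw [← lintegral_const_mul _ hGm]
    refine lintegral_mono fun y => ?_
    have hslice : ∀ σ : ℝ, ENNReal.ofReal (t ^ 4)⁻¹ *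
        ({q : ℝ × Eu 4 | ‖q.2 - q.1 • e‖ < q.1 * t / 2}.indicator
          (fun q => ENNReal.ofReal q.1⁻¹ * G q.2) (σ, y)) =
        ENNReal.ofReal (t ^ 4)⁻¹ * G y * {σ : ℝ | ‖y - σ • e‖ < σ * t / 2}.indicator
          (fun σ => ENNReal.ofReal σ⁻¹) σ := by
      intro σ
      by_cases hy : ‖y - σ • e‖ < σ * t / 2
      · rw [indicator_of_mem (by exact hy), indicator_of_mem (by exact hy)]
        ring
      · rw [indicator_of_notMem (by exact hy), indicator_of_notMem (by exact hy)]
        simp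
    rw [lintegral_congr hslice, lintegral_const_mul _
      (Measurable.indicator (by fun_prop) (hset2 y))]
    calc _ ≤ ENNReal.ofReal (t ^ 4)⁻¹ * G y * ENNReal.ofReal (2 * t) := by
          gcongr
          exact lintegral_log_window he ht y
      _ = _ := by
          rw [mul_right_comm, ← ENNReal.ofReal_mul (by positivity)]
          congr 2
          field_simp
  · exact (hjoint.const_mul _).aemeasurable

/-! ### The combined estimate -/

/-- The words `μ` in the rotation fields of length at most two. -/
def shortWords : Finset (Σ m : ℕ, Fin m → OP) :=
  (Finset.range 3).sigma fun _ => Finset.univ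

lemma rotSum_le (h : Eu 4 → ℝ) (y : Eu 4) :
    rotSum h y ≤ 43 * ∑ μ ∈ shortWords, |rotIter μ.2 h y| := by
  set S := ∑ μ ∈ shortWords, |rotIter μ.2 h y|
  have hle : ∀ μ ∈ shortWords, |rotIter μ.2 h y| ≤ S := fun μ hμ =>
    Finset.single_le_sum (f := fun μ : Σ m : ℕ, Fin m → OP => |rotIter μ.2 h y|)
      (fun _ _ => abs_nonneg _) hμ
  have h0 : |h y| ≤ S := hle ⟨0, Fin.elim0⟩ (Finset.mem_sigma.2 ⟨by simp, Finset.mem_univ _⟩)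
  have h1 : ∀ p : OP, |rot p.1.1 p.1.2 h y| ≤ S := fun p =>
    hle ⟨1, fun _ => p⟩ (by simp [shortWords])
  have h2 : ∀ p q : OP, |rot q.1.1 q.1.2 (rot p.1.1 p.1.2 h) y| ≤ S := fun p q =>
    hle ⟨2, ![q, p]⟩ (by simp [shortWords])
  have hcard : (Finset.univ : Finset OP).card = 6 := by decide
  have s1 : ∑ p : OP, |rot p.1.1 p.1.2 h y| ≤ 6 * S := by
    refine (Finset.sum_le_card_nsmul _ _ S fun p _ => h1 p).trans ?_
    rw [hcard]; simp
  have s2 : ∑ p : OP, ∑ q : OP, |rot q.1.1 q.1.2 (rot p.1.1 p.1.2 h) y| ≤ 6 * (6 * S) := by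
    refine (Finset.sum_le_card_nsmul _ _ (6 * S) fun p _ => ?_).trans ?_
    · refine (Finset.sum_le_card_nsmul _ _ S fun q _ => h2 p q).trans ?_
      rw [hcard]; simp
    · rw [hcard]; simp
  unfold rotSum
  linarith

/-- The constant `∫₀¹ t^{-1/2} dt`. -/
lemma lintegral_inv_sqrt_lt_top :
    ∫⁻ t in Ioc (0 : ℝ) 1, ENNReal.ofReal (t ^ (-(1 / 2) : ℝ)) < ⊤ := by
  have h : IntegrableOn (fun t : ℝ => t ^ (-(1 / 2) : ℝ)) (Ioc 0 1) := by
    rw [← intervalIntegrable_iff_integrableOn_Ioc_of_le zero_le_one]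
    exact intervalIntegral.intervalIntegrable_rpow' (by norm_num)
  exact h.lintegral_lt_top

/-- The angular estimate, squared, combined with the radial estimate at each point of the arc. -/
lemma sq_le_lintegral_rayEnergy {h : Eu 4 → ℝ} (hh : ContDiff ℝ (⊤ : ℕ∞) h)
    (hc : HasCompactSupport h) {r : ℝ} (hr : 0 < r) {e w : Eu 4} (he : ‖e‖ = 1)
    (hw : ‖w‖ < 1 / 2) :
    ENNReal.ofReal ((r * |h (r • e)|) ^ 2) ≤
      (∫⁻ t in Ioc (0 : ℝ) 1, ENNReal.ofReal (t ^ (-(1 / 2) : ℝ))) *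
        ∫⁻ t in Ioc (0 : ℝ) 1, ENNReal.ofReal (1720 ^ 2 * shortWords.card * t ^ (5 / 2 : ℝ)) *
          ∑ μ ∈ shortWords, 3 * rayEnergy (rotIter μ.2 h) (e + t • w) := by
  set S : Eu 4 → ℝ := fun y => ∑ μ ∈ shortWords, |rotIter μ.2 h y| with hS
  have hS0 : ∀ y, 0 ≤ S y := fun y => Finset.sum_nonneg fun _ _ => abs_nonneg _
  have hSc : Continuous S :=
    continuous_finsetSum _ fun μ _ => (contDiff_rotIter hh μ.2).continuous.abs
  have hSm : Measurable fun t : ℝ => S (arc r e w t) := by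
    have h1 : Measurable fun t : ℝ => arc r e w t := by
      unfold arc
      fun_prop
    exact hSc.measurable.comp h1
  have hfm : Measurable fun t : ℝ =>
      ENNReal.ofReal (t ^ (5 / 4 : ℝ) * (1720 * S (arc r e w t))) :=
    ((measurable_id.pow_const _).mul (hSm.const_mul _)).ennreal_ofReal
  have h1 : ENNReal.ofReal |h (r • e)| ≤ ∫⁻ t in Ioc (0 : ℝ) 1,
      ENNReal.ofReal (t ^ (-(1 / 4) : ℝ)) *
        ENNReal.ofReal (t ^ (5 / 4 : ℝ) * (1720 * S (arc r e w t))) := by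
    refine (abs_le_lintegral_arc hh r he hw).trans ?_
    refine setLIntegral_mono' measurableSet_Ioc fun t ht => ?_
    have ht0 : 0 < t := ht.1
    rw [← ENNReal.ofReal_mul (by positivity), ← mul_assoc (t ^ (-(1 / 4) : ℝ)),
      ← Real.rpow_add ht0, show (-(1 / 4) + 5 / 4 : ℝ) = 1 by norm_num, Real.rpow_one]
    refine ENNReal.ofReal_le_ofReal ?_
    have := rotSum_le h (arc r e w t)
    refine mul_le_mul_of_nonneg_left ?_ ht0.le
    calc 40 * rotSum h (arc r e w t) ≤ 40 * (43 * S (arc r e w t)) := by gcongr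
      _ = _ := by ring
  have h2 : ENNReal.ofReal ((r * |h (r • e)|) ^ 2) ≤ ENNReal.ofReal (r ^ 2) *
      ((∫⁻ t in Ioc (0 : ℝ) 1, ENNReal.ofReal (t ^ (-(1 / 4) : ℝ)) ^ 2) *
        ∫⁻ t in Ioc (0 : ℝ) 1,
          ENNReal.ofReal (t ^ (5 / 4 : ℝ) * (1720 * S (arc r e w t))) ^ 2) := by
    rw [mul_pow, ENNReal.ofReal_mul (by positivity), ENNReal.ofReal_pow (abs_nonneg _)]
    gcongr
    refine le_trans ?_ (lintegral_mul_sq_le _ ?_ ?_)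
    · gcongr
    · exact (by fun_prop : Measurable _).aemeasurable
    · exact hfm.aemeasurable
  refine h2.trans ?_
  rw [mul_left_comm]
  gcongr ?_ * ?_
  · refine setLIntegral_mono' measurableSet_Ioc fun t ht => ?_
    have ht0 : 0 < t := ht.1
    rw [← ENNReal.ofReal_pow (by positivity), ← Real.rpow_natCast, ← Real.rpow_mul ht0.le]
    norm_num
  · rw [← lintegral_const_mul _ (hfm.pow_const 2)]
    refine setLIntegral_mono' measurableSet_Ioc fun t ht => ?_
    have ht0 : 0 < t := ht.1
    have hsum : ∑ μ ∈ shortWords, ENNReal.ofReal (r ^ 2 * rotIter μ.2 h (arc r e w t) ^ 2) ≤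
        ∑ μ ∈ shortWords, 3 * rayEnergy (rotIter μ.2 h) (e + t • w) :=
      Finset.sum_le_sum fun μ _ => radial_arc (contDiff_rotIter hh μ.2)
        (hasCompactSupport_rotIter hc μ.2) hr he hw ⟨ht.1.le, ht.2⟩
    refine le_trans ?_ (mul_le_mul_right hsum _)
    rw [← ENNReal.ofReal_sum_of_nonneg (fun _ _ => by positivity),
      ← ENNReal.ofReal_pow (mul_nonneg (by positivity) (mul_nonneg (by norm_num) (hS0 _))),
      ← ENNReal.ofReal_mul (by positivity), ← ENNReal.ofReal_mul (by positivity)]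
    refine ENNReal.ofReal_le_ofReal ?_
    have hpow : (t ^ (5 / 4 : ℝ)) ^ 2 = t ^ (5 / 2 : ℝ) := by
      rw [← Real.rpow_natCast, ← Real.rpow_mul ht0.le]
      norm_num
    have hcs : S (arc r e w t) ^ 2 ≤
        shortWords.card * ∑ μ ∈ shortWords, rotIter μ.2 h (arc r e w t) ^ 2 := by
      have := sq_sum_le_card_mul_sum_sq (s := shortWords)
        (f := fun μ => |rotIter μ.2 h (arc r e w t)|)
      simpa only [sq_abs] using this
    rw [← Finset.mul_sum, mul_pow, mul_pow, hpow]
    have := mul_le_mul_of_nonneg_left hcs (by positivity : 0 ≤ 1720 ^ 2 * r ^ 2 * t ^ (5 / 2 : ℝ))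
    linarith

lemma lintegral_spGradMag_sq (F : Eu 4 → ℝ) :
    ∫⁻ y, ENNReal.ofReal (spGradMag F y ^ 2) = eLpNorm (spGradMag F) 2 volume ^ 2 := by
  have h := eLpNorm_nnreal_pow_eq_lintegral (f := spGradMag F) (μ := volume) (p := 2) (by norm_num)
  norm_num at h
  rw [h]
  refine lintegral_congr fun y => ?_
  have h0 : 0 ≤ spGradMag F y := Real.sqrt_nonneg _
  rw [ENNReal.ofReal_pow h0, ← ofReal_norm, Real.norm_eq_abs, abs_of_nonneg h0]

lemma measurable_rayEnergy {F : Eu 4 → ℝ} (hF : ContDiff ℝ (⊤ : ℕ∞) F) :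
    Measurable (rayEnergy F) := by
  have h1 := (continuous_spGradMag hF).measurable
  unfold rayEnergy
  refine Measurable.lintegral_prod_right' (f := fun q : Eu 4 × ℝ => ENNReal.ofReal (q.2 ^ 3) *
    ENNReal.ofReal (spGradMag F (q.2 • q.1) ^ 2)) ?_
  fun_prop

/-- The squared estimate with an unspecified finite constant, obtained by averaging over `w`. -/
lemma exists_sq_bound : ∃ K : ℝ≥0∞, K < ⊤ ∧ ∀ h : Eu 4 → ℝ, ContDiff ℝ (⊤ : ℕ∞) h →
    HasCompactSupport h → ∀ r : ℝ, 0 < r → ∀ e : Eu 4, ‖e‖ = 1 →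
      ENNReal.ofReal ((r * |h (r • e)|) ^ 2) ≤
        K * ∑ μ ∈ shortWords, eLpNorm (spGradMag (rotIter μ.2 h)) 2 volume ^ 2 := by
  set I : ℝ≥0∞ := ∫⁻ t in Ioc (0 : ℝ) 1, ENNReal.ofReal (t ^ (-(1 / 2) : ℝ)) with hI
  have hItop : I < ⊤ := lintegral_inv_sqrt_lt_top
  set V : ℝ≥0∞ := volume (Metric.ball (0 : Eu 4) (1 / 2)) with hV
  have hV0 : V ≠ 0 := (Metric.measure_ball_pos volume _ (by norm_num)).ne'
  have hVtop : V ≠ ⊤ := measure_ball_lt_top.ne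
  set c : ℝ := 1720 ^ 2 * shortWords.card with hc0
  have hcnn : 0 ≤ c := by positivity
  refine ⟨V⁻¹ * (I * (ENNReal.ofReal (6 * c) * I)), ?_, ?_⟩
  · exact ENNReal.mul_lt_top (ENNReal.inv_lt_top.2 (pos_iff_ne_zero.2 hV0))
      (ENNReal.mul_lt_top hItop (ENNReal.mul_lt_top ENNReal.ofReal_lt_top hItop))
  intro h hh hc r hr e he
  set N : ℝ≥0∞ := ∑ μ ∈ shortWords, eLpNorm (spGradMag (rotIter μ.2 h)) 2 volume ^ 2 with hN
  have hR : ∀ μ : Σ m : ℕ, Fin m → OP, Measurable (rayEnergy (rotIter μ.2 h)) := fun μ =>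
    measurable_rayEnergy (contDiff_rotIter hh μ.2)
  have hmeas : Measurable fun q : Eu 4 × ℝ => ENNReal.ofReal (c * q.2 ^ (5 / 2 : ℝ)) *
      ∑ μ ∈ shortWords, 3 * rayEnergy (rotIter μ.2 h) (e + q.2 • q.1) := by
    refine Measurable.mul (by fun_prop) (Finset.measurable_fun_sum _ fun μ _ => ?_)
    exact ((hR μ).comp (by fun_prop)).const_mul 3
  have h1 : V * ENNReal.ofReal ((r * |h (r • e)|) ^ 2) ≤
      ∫⁻ w in Metric.ball (0 : Eu 4) (1 / 2), I * ∫⁻ t in Ioc (0 : ℝ) 1,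
        ENNReal.ofReal (c * t ^ (5 / 2 : ℝ)) *
          ∑ μ ∈ shortWords, 3 * rayEnergy (rotIter μ.2 h) (e + t • w) := by
    rw [mul_comm, hV, ← setLIntegral_const]
    refine setLIntegral_mono' Metric.isOpen_ball.measurableSet fun w hw => ?_
    exact sq_le_lintegral_rayEnergy hh hc hr he (mem_ball_zero_iff.1 hw)
  have h2 : ∫⁻ w in Metric.ball (0 : Eu 4) (1 / 2), I * ∫⁻ t in Ioc (0 : ℝ) 1,
        ENNReal.ofReal (c * t ^ (5 / 2 : ℝ)) *
          ∑ μ ∈ shortWords, 3 * rayEnergy (rotIter μ.2 h) (e + t • w) ≤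
      I * (ENNReal.ofReal (6 * c) * I * N) := by
    rw [lintegral_const_mul' _ _ hItop.ne, lintegral_lintegral_swap hmeas.aemeasurable]
    gcongr
    have h3 : ∀ t ∈ Ioc (0 : ℝ) 1, ∫⁻ w in Metric.ball (0 : Eu 4) (1 / 2),
        ENNReal.ofReal (c * t ^ (5 / 2 : ℝ)) *
          ∑ μ ∈ shortWords, 3 * rayEnergy (rotIter μ.2 h) (e + t • w) ≤
        ENNReal.ofReal (6 * c) * N * ENNReal.ofReal (t ^ (-(1 / 2) : ℝ)) := by
      intro t ht
      have ht0 : 0 < t := ht.1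
      have hQt : ∀ μ : Σ m : ℕ, Fin m → OP,
          Measurable fun w : Eu 4 => rayEnergy (rotIter μ.2 h) (e + t • w) := fun μ =>
        (hR μ).comp (by fun_prop)
      rw [lintegral_const_mul' _ _ ENNReal.ofReal_ne_top,
        lintegral_finsetSum _ fun μ _ => (hQt μ).const_mul 3]
      calc _ ≤ ENNReal.ofReal (c * t ^ (5 / 2 : ℝ)) * ∑ μ ∈ shortWords,
            3 * (ENNReal.ofReal (2 * (t ^ 3)⁻¹) *
              eLpNorm (spGradMag (rotIter μ.2 h)) 2 volume ^ 2) := by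
            gcongr with μ hμ
            rw [lintegral_const_mul _ (hQt μ), ← lintegral_spGradMag_sq]
            gcongr
            exact lintegral_rayEnergy_le (contDiff_rotIter hh μ.2) he ht
        _ = _ := by
            rw [← Finset.mul_sum, ← Finset.mul_sum, ← hN, ← mul_assoc, ← mul_assoc,
              mul_right_comm _ N, ← ENNReal.ofReal_ofNat 3, ← ENNReal.ofReal_mul (by positivity),
              ← ENNReal.ofReal_mul (by positivity), ← ENNReal.ofReal_mul (by positivity)]
            congr 2
            have : t ^ (5 / 2 : ℝ) * (t ^ 3)⁻¹ = t ^ (-(1 / 2) : ℝ) := by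
              rw [← Real.rpow_natCast, ← Real.rpow_neg ht0.le, ← Real.rpow_add ht0]
              norm_num
            rw [← this]
            ring
    calc _ ≤ ∫⁻ t in Ioc (0 : ℝ) 1, ENNReal.ofReal (6 * c) * N *
          ENNReal.ofReal (t ^ (-(1 / 2) : ℝ)) := setLIntegral_mono' measurableSet_Ioc h3
      _ = _ := by
        rw [lintegral_const_mul _ (by fun_prop), ← hI]
        ring
  have h4 := h1.trans h2
  calc ENNReal.ofReal ((r * |h (r • e)|) ^ 2)
      = V⁻¹ * (V * ENNReal.ofReal ((r * |h (r • e)|) ^ 2)) := by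
        rw [← mul_assoc, ENNReal.inv_mul_cancel hV0 hVtop, one_mul]
    _ ≤ V⁻¹ * (I * (ENNReal.ofReal (6 * c) * I * N)) := by gcongr
    _ = _ := by ring

/-- Weighted Sobolev estimate with full gradient on ℝ⁴. -/
theorem weighted_sobolev_gradient :
    ∃ C : ℝ, 0 < C ∧ ∀ h : Eu 4 → ℝ, ContDiff ℝ (⊤ : ℕ∞) h → HasCompactSupport h →
      ∀ R : ℝ, 0 < R → ∀ x : Eu 4, R/2 < ‖x‖ → ‖x‖ < R →
        ENNReal.ofReal (R * |h x|)
          ≤ ENNReal.ofReal C *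
            ∑ m ∈ Finset.range 3, ∑ μ : Fin m → OP,
              eLpNorm (spGradMag (rotIter μ h)) 2 (volume : Measure (Eu 4)) := by
  obtain ⟨K, hK, hbound⟩ := exists_sq_bound
  -- Any `C ≥ 2 √K` works; `2 (K + 1)` is one, since `K ≤ (K + 1)²`.
  refine ⟨2 * (K.toReal + 1), by positivity, fun h hh hc R hR x hx1 hx2 => ?_⟩
  set S : ℝ≥0∞ := ∑ μ ∈ shortWords, eLpNorm (spGradMag (rotIter μ.2 h)) 2 volume with hS
  have hsum : ∑ m ∈ Finset.range 3, ∑ μ : Fin m → OP,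
      eLpNorm (spGradMag (rotIter μ h)) 2 (volume : Measure (Eu 4)) = S := by
    rw [hS, shortWords, Finset.sum_sigma]
  rw [hsum]
  have hr : 0 < ‖x‖ := by linarith
  have hxe : ‖x‖ • (‖x‖⁻¹ • x) = x := by rw [smul_smul, mul_inv_cancel₀ hr.ne', one_smul]
  have h1 := hbound h hh hc ‖x‖ hr (‖x‖⁻¹ • x)
    (by rw [norm_smul, norm_inv, norm_norm, inv_mul_cancel₀ hr.ne'])
  rw [hxe, ENNReal.ofReal_pow (by positivity)] at h1
  have h2 : ∑ μ ∈ shortWords, eLpNorm (spGradMag (rotIter μ.2 h)) 2 volume ^ 2 ≤ S ^ 2 := by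
    rw [sq S, hS, Finset.sum_mul]
    refine Finset.sum_le_sum fun μ hμ => ?_
    rw [sq]
    gcongr
    exact Finset.single_le_sum
      (f := fun μ : Σ m : ℕ, Fin m → OP => eLpNorm (spGradMag (rotIter μ.2 h)) 2 volume)
      (fun _ _ => zero_le) hμ
  have h3 : ENNReal.ofReal (‖x‖ * |h x|) ≤ (K + 1) * S := by
    rw [← ENNReal.pow_le_pow_left_iff two_ne_zero]
    calc _ ≤ K * S ^ 2 := h1.trans (by gcongr)
      _ ≤ (K + 1) ^ 2 * S ^ 2 := by
        gcongr
        calc K ≤ K + 1 := le_self_add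
          _ ≤ (K + 1) ^ 2 := le_self_pow₀ le_add_self two_ne_zero
      _ = _ := by ring
  have hC : ENNReal.ofReal (2 * (K.toReal + 1)) = 2 * (K + 1) := by
    rw [ENNReal.ofReal_mul (by norm_num), ENNReal.ofReal_add ENNReal.toReal_nonneg zero_le_one,
      ENNReal.ofReal_toReal hK.ne]
    simp
  calc ENNReal.ofReal (R * |h x|) ≤ ENNReal.ofReal (2 * (‖x‖ * |h x|)) := by
        refine ENNReal.ofReal_le_ofReal ?_
        nlinarith [abs_nonneg (h x)]
    _ = 2 * ENNReal.ofReal (‖x‖ * |h x|) := by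
        rw [ENNReal.ofReal_mul (by norm_num)]
        simp
    _ ≤ 2 * ((K + 1) * S) := by gcongr
    _ = _ := by rw [hC, mul_assoc]
end
end
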